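/- arXiv:2401.16941 — 6 statements merged into one kernel-verified Lean document; each statement's English description precedes it below -/
import Mathlib

section
/- Let K be a field of characteristic 0. For every pair (ρ, σ) ∈ ℝ² with ρ + σ ≥ 0, there exists a degree map u on the Weyl algebra A_1(K) over K with u(p) = ρ and u(q) = σ. -/
noncomputable section

/-- The defining relation of the Weyl algebra: `q p = p q + 1`
(with `false` playing the role of `p` and `true` that of `q`). -/
inductive WeylRel (K : Type*) [Field K] : FreeAlgebra K Bool → FreeAlgebra K Bool → Prop
  | rel : WeylRel K (FreeAlgebra.ι K true * FreeAlgebra.ι K false)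
      (FreeAlgebra.ι K false * FreeAlgebra.ι K true + 1)

/-- The Weyl algebra `A₁(K)`: the quotient of the free associative unital `K`-algebra on two
generators `p`, `q` by the two-sided ideal generated by `q p - p q - 1`. -/
def Weyl (K : Type*) [Field K] := RingQuot (WeylRel K)

instance (K : Type*) [Field K] : Ring (Weyl K) :=
  inferInstanceAs (Ring (RingQuot (WeylRel K)))

instance (K : Type*) [Field K] : Algebra K (Weyl K) :=
  inferInstanceAs (Algebra K (RingQuot (WeylRel K)))

/-- The generator `p` of the Weyl algebra. -/
def Wp (K : Type*) [Field K] : Weyl K :=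
  RingQuot.mkAlgHom K (WeylRel K) (FreeAlgebra.ι K false)

/-- The generator `q` of the Weyl algebra. -/
def Wq (K : Type*) [Field K] : Weyl K :=
  RingQuot.mkAlgHom K (WeylRel K) (FreeAlgebra.ι K true)

/-- A degree map on a ring `R`: a function `u : R → ℝ ∪ {-∞}` with
`u(fg) = u(f) + u(g)`, `u(f+g) ≤ max (u f) (u g)`, and `u f = -∞ ↔ f = 0`. -/
structure IsDegreeMap {R : Type*} [Ring R] (u : R → WithBot ℝ) : Prop where
  map_mul : ∀ f g, u (f * g) = u f + u g
  add_le : ∀ f g, u (f + g) ≤ max (u f) (u g)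
  bot_iff : ∀ f, u f = ⊥ ↔ f = 0

end

noncomputable section

namespace WeylAux

variable {K : Type*} [Field K]

theorem rel : Wq K * Wp K = Wp K * Wq K + 1 := by
  have := RingQuot.mkAlgHom_rel K (WeylRel.rel (K := K))
  rw [map_mul, map_add, map_mul, map_one] at this
  exact this

/-- ordered monomials -/
def e (K : Type*) [Field K] (a : ℕ × ℕ) : Weyl K := Wp K ^ a.1 * Wq K ^ a.2

theorem e_zero : e K 0 = 1 := by simp [e]

theorem p_mul_e (a : ℕ × ℕ) : Wp K * e K a = e K ((1, 0) + a) := by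
  simp only [e, Prod.fst_add, Prod.snd_add, zero_add, pow_add, pow_one, mul_assoc]

theorem q_mul_pow (k : ℕ) :
    Wq K * Wp K ^ k = Wp K ^ k * Wq K + (k : K) • Wp K ^ (k - 1) := by
  induction k with
  | zero => simp
  | succ k ih =>
    rw [pow_succ, ← mul_assoc, ih, add_mul, mul_assoc, rel, mul_add, mul_one, ← mul_assoc,
      add_assoc, smul_mul_assoc]
    congr 1
    rcases k with _ | k
    · simp
    · simp only [Nat.add_sub_cancel, ← pow_succ]
      push_cast
      simp only [add_smul, one_smul]
      abel

theorem q_mul_e (a : ℕ × ℕ) :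
    Wq K * e K a = e K ((0, 1) + a) + (a.1 : K) • e K (a.1 - 1, a.2) := by
  simp only [e, Prod.fst_add, Prod.snd_add, zero_add]
  rw [← mul_assoc, q_mul_pow, add_mul, mul_assoc, ← pow_succ', smul_mul_assoc, add_comm 1]

/-- the key -/
def key (ρ σ : ℝ) (a : ℕ × ℕ) : ℝ ×ₗ (ℕ ×ₗ ℕ) :=
  toLex (ρ * a.1 + σ * a.2, toLex (a.2, a.1))

theorem key_add (ρ σ : ℝ) (a b : ℕ × ℕ) : key ρ σ (a + b) = key ρ σ a + key ρ σ b := by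
  have : ρ * ((a + b).1 : ℕ) + σ * ((a + b).2 : ℕ)
      = (ρ * a.1 + σ * a.2) + (ρ * b.1 + σ * b.2) := by
    simp only [Prod.fst_add, Prod.snd_add]; push_cast; ring
  unfold key
  rw [this]
  rfl

theorem key_inj (ρ σ : ℝ) : Function.Injective (key ρ σ) := by
  intro a b hab
  have h1 := congrArg (fun x => (ofLex (ofLex x).2)) hab
  simp only [key, ofLex_toLex, Prod.mk.injEq] at h1
  exact Prod.ext h1.2 h1.1

theorem key_fst_le {ρ σ : ℝ} {a b : ℕ × ℕ} (h : key ρ σ a ≤ key ρ σ b) :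
    ρ * a.1 + σ * a.2 ≤ ρ * b.1 + σ * b.2 := by
  rw [key, key, Prod.Lex.toLex_le_toLex] at h
  rcases h with h | h
  · exact h.le
  · exact h.1.le

theorem key_low {ρ σ : ℝ} (h : 0 ≤ ρ + σ) (a : ℕ × ℕ) (ha : a.1 ≠ 0) :
    key ρ σ (a.1 - 1, a.2) < key ρ σ ((0, 1) + a) := by
  rw [key, key, Prod.Lex.toLex_lt_toLex]
  obtain ⟨i, j⟩ := a
  obtain ⟨i, rfl⟩ := Nat.exists_eq_succ_of_ne_zero ha
  simp only [Nat.succ_sub_one, Prod.fst_add, Prod.snd_add, Prod.Lex.toLex_lt_toLex]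
  push_cast
  rcases h.lt_or_eq with h | h
  · left; nlinarith
  · right
    constructor
    · have : σ = -ρ := by linarith
      subst this; ring
    · left; omega

/-- strictly lower part -/
def L (K : Type*) [Field K] (ρ σ : ℝ) (a : ℕ × ℕ) : Submodule K (Weyl K) :=
  Submodule.span K (e K '' {d | key ρ σ d < key ρ σ a})

theorem e_mem {ρ σ : ℝ} {a b : ℕ × ℕ} (h : key ρ σ a < key ρ σ b) : e K a ∈ L K ρ σ b :=
  Submodule.subset_span ⟨a, h, rfl⟩

theorem L_mono {ρ σ : ℝ} {a b : ℕ × ℕ} (h : key ρ σ a ≤ key ρ σ b) : L K ρ σ a ≤ L K ρ σ b :=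
  Submodule.span_mono (Set.image_mono fun _ hd => lt_of_lt_of_le hd h)

theorem key_add_lt {ρ σ : ℝ} {a b c : ℕ × ℕ} (h : key ρ σ a < key ρ σ b) :
    key ρ σ (c + a) < key ρ σ (c + b) := by
  rw [key_add, key_add]; exact add_lt_add_right h _

theorem p_mul_L {ρ σ : ℝ} (a : ℕ × ℕ) {f : Weyl K} (hf : f ∈ L K ρ σ a) :
    Wp K * f ∈ L K ρ σ ((1, 0) + a) := by
  refine Submodule.span_induction (p := fun f _ => Wp K * f ∈ L K ρ σ ((1, 0) + a))
    ?_ ?_ ?_ ?_ hf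
  · rintro _ ⟨d, hd, rfl⟩
    rw [p_mul_e]
    exact e_mem (key_add_lt hd)
  · simp
  · intro x y _ _ hx hy; rw [mul_add]; exact add_mem hx hy
  · intro c x _ hx; rw [mul_smul_comm]; exact Submodule.smul_mem _ _ hx

theorem q_low {ρ σ : ℝ} (h : 0 ≤ ρ + σ) (a : ℕ × ℕ) :
    Wq K * e K a - e K ((0, 1) + a) ∈ L K ρ σ ((0, 1) + a) := by
  rw [q_mul_e, add_sub_cancel_left]
  by_cases ha : a.1 = 0
  · simp [ha]
  · exact Submodule.smul_mem _ _ (e_mem (key_low h a ha))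

theorem q_mul_L {ρ σ : ℝ} (h : 0 ≤ ρ + σ) (a : ℕ × ℕ) {f : Weyl K} (hf : f ∈ L K ρ σ a) :
    Wq K * f ∈ L K ρ σ ((0, 1) + a) := by
  refine Submodule.span_induction (p := fun f _ => Wq K * f ∈ L K ρ σ ((0, 1) + a))
    ?_ ?_ ?_ ?_ hf
  · rintro _ ⟨d, hd, rfl⟩
    have h1 : key ρ σ ((0, 1) + d) < key ρ σ ((0, 1) + a) := key_add_lt hd
    have := add_mem (L_mono h1.le (q_low (K := K) h d)) (e_mem h1)
    rwa [sub_add_cancel] at this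
  · simp
  · intro x y _ _ hx hy; rw [mul_add]; exact add_mem hx hy
  · intro c x _ hx; rw [mul_smul_comm]; exact Submodule.smul_mem _ _ hx

theorem e_mul_e {ρ σ : ℝ} (h : 0 ≤ ρ + σ) (a b : ℕ × ℕ) :
    e K a * e K b - e K (a + b) ∈ L K ρ σ (a + b) := by
  obtain ⟨i, j⟩ := a
  induction i with
  | zero =>
    induction j with
    | zero =>
      have : ((0, 0) : ℕ × ℕ) = 0 := rfl
      simp [this, e_zero]
    | succ j ih =>
      have h0 : ((0, j + 1) : ℕ × ℕ) + b = (0, 1) + ((0, j) + b) := by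
        ext <;> simp; omega
      have h1 : e K (0, j + 1) = Wq K * e K (0, j) := by simp [e, pow_succ']
      rw [h0, h1]
      have := add_mem (q_mul_L h _ ih) (q_low (K := K) h ((0, j) + b))
      rwa [mul_sub, sub_add_sub_cancel, ← mul_assoc] at this
  | succ i ih =>
    have h0 : ((i + 1, j) : ℕ × ℕ) + b = (1, 0) + ((i, j) + b) := by
      ext <;> simp; omega
    have h1 : e K (i + 1, j) = Wp K * e K (i, j) := by simp [e, pow_succ', mul_assoc]
    rw [h0, h1]
    have := p_mul_L _ ih
    rwa [mul_sub, p_mul_e, ← mul_assoc] at this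

theorem e_mul_e_mem {ρ σ : ℝ} (h : 0 ≤ ρ + σ) {a b c : ℕ × ℕ}
    (hc : key ρ σ (a + b) < key ρ σ c) : e K a * e K b ∈ L K ρ σ c := by
  have := add_mem (L_mono hc.le (e_mul_e (K := K) h a b)) (e_mem hc)
  rwa [sub_add_cancel] at this

theorem L_mul_L {ρ σ : ℝ} (h : 0 ≤ ρ + σ) {a b : ℕ × ℕ} {f g : Weyl K}
    (hf : f ∈ L K ρ σ a) (hg : g ∈ L K ρ σ b) : f * g ∈ L K ρ σ (a + b) := by
  have := Submodule.mul_mem_mul hf hg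
  rw [L, L, Submodule.span_mul_span] at this
  refine Submodule.span_le.2 ?_ this
  rintro _ ⟨_, ⟨c, hc, rfl⟩, _, ⟨d, hd, rfl⟩, rfl⟩
  refine e_mul_e_mem h ?_
  rw [key_add, key_add]
  exact add_lt_add hc hd

theorem e_mul_L {ρ σ : ℝ} (h : 0 ≤ ρ + σ) {a b : ℕ × ℕ} {g : Weyl K}
    (hg : g ∈ L K ρ σ b) : e K a * g ∈ L K ρ σ (a + b) := by
  have := Submodule.mul_mem_mul (Submodule.mem_span_singleton_self (R := K) (e K a)) hg
  rw [L, Submodule.span_mul_span] at this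
  refine Submodule.span_le.2 ?_ this
  rintro _ ⟨_, rfl, _, ⟨d, hd, rfl⟩, rfl⟩
  exact e_mul_e_mem h (key_add_lt hd)

theorem L_mul_e {ρ σ : ℝ} (h : 0 ≤ ρ + σ) {a b : ℕ × ℕ} {f : Weyl K}
    (hf : f ∈ L K ρ σ a) : f * e K b ∈ L K ρ σ (a + b) := by
  have := Submodule.mul_mem_mul hf (Submodule.mem_span_singleton_self (R := K) (e K b))
  rw [L, Submodule.span_mul_span] at this
  refine Submodule.span_le.2 ?_ this
  rintro _ ⟨_, ⟨d, hd, rfl⟩, _, rfl, rfl⟩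
  refine e_mul_e_mem h ?_
  rw [add_comm, add_comm a]
  exact key_add_lt hd

/-- the left regular representation on ordinary polynomials -/
def repGen (K : Type*) [Field K] : Bool → Module.End K (MvPolynomial Bool K)
  | false => LinearMap.mulLeft K (MvPolynomial.X false)
  | true => LinearMap.mulLeft K (MvPolynomial.X true) +
      (MvPolynomial.pderiv (R := K) false).toLinearMap

def rep (K : Type*) [Field K] : Weyl K →ₐ[K] Module.End K (MvPolynomial Bool K) :=
  RingQuot.liftAlgHom K ⟨FreeAlgebra.lift K (repGen K), by
    rintro _ _ ⟨⟩
    simp only [map_mul, map_add, map_one, FreeAlgebra.lift_ι_apply]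
    refine LinearMap.ext fun x => ?_
    simp [repGen, Derivation.leibniz]
    ring⟩

theorem rep_p : rep K (Wp K) = repGen K false := by
  refine (RingQuot.liftAlgHom_mkAlgHom_apply _ _ _ _).trans ?_
  simp

theorem rep_q : rep K (Wq K) = repGen K true := by
  refine (RingQuot.liftAlgHom_mkAlgHom_apply _ _ _ _).trans ?_
  simp

theorem rep_e (a : ℕ × ℕ) : rep K (e K a) 1 =
    (MvPolynomial.X false ^ a.1 * MvPolynomial.X true ^ a.2 : MvPolynomial Bool K) := by
  have hq : ∀ j : ℕ, (rep K (Wq K) ^ j) 1 = (MvPolynomial.X true ^ j : MvPolynomial Bool K) := by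
    intro j
    induction j with
    | zero => simp
    | succ j ih =>
      rw [pow_succ', Module.End.mul_apply, ih, rep_q]
      simp [repGen, Derivation.leibniz_pow, pow_succ']
  have hp : ∀ (i : ℕ) (x : MvPolynomial Bool K),
      (rep K (Wp K) ^ i) x = MvPolynomial.X false ^ i * x := by
    intro i x
    induction i with
    | zero => simp
    | succ i ih =>
      rw [pow_succ', Module.End.mul_apply, ih, rep_p]
      simp [repGen, pow_succ', mul_assoc]
  rw [e, map_mul, map_pow, map_pow, Module.End.mul_apply, hq, hp]

/-- exponent -/
def ex (a : ℕ × ℕ) : Bool →₀ ℕ := Finsupp.single false a.1 + Finsupp.single true a.2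

theorem ex_inj : Function.Injective ex := by
  intro a b hab
  have h1 := DFunLike.congr_fun hab false
  have h2 := DFunLike.congr_fun hab true
  simp [ex] at h1 h2
  exact Prod.ext h1 h2

theorem rep_e' (a : ℕ × ℕ) : rep K (e K a) 1 = MvPolynomial.monomial (ex a) (1 : K) := by
  rw [rep_e, MvPolynomial.X_pow_eq_monomial, MvPolynomial.X_pow_eq_monomial,
    MvPolynomial.monomial_mul, one_mul, ex]

theorem coeff_L {ρ σ : ℝ} {a : ℕ × ℕ} {f : Weyl K} (hf : f ∈ L K ρ σ a) :
    MvPolynomial.coeff (ex a) (rep K f 1) = 0 := by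
  refine Submodule.span_induction
    (p := fun f _ => MvPolynomial.coeff (ex a) (rep K f 1) = 0) ?_ ?_ ?_ ?_ hf
  · rintro _ ⟨d, hd, rfl⟩
    rw [rep_e', MvPolynomial.coeff_monomial, if_neg]
    intro hh
    rw [ex_inj hh] at hd
    exact lt_irrefl (key ρ σ a) hd
  · simp
  · intro x y _ _ hx hy; simp [hx, hy]
  · intro c x _ hx; simp [hx]

theorem e_notMem {ρ σ : ℝ} (a : ℕ × ℕ) : e K a ∉ L K ρ σ a := by
  intro hh
  have := coeff_L hh
  rw [rep_e', MvPolynomial.coeff_monomial, if_pos rfl] at this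
  exact one_ne_zero this

/-- the quotient map -/
def mk (K : Type*) [Field K] : FreeAlgebra K Bool →ₐ[K] Weyl K := RingQuot.mkAlgHom K (WeylRel K)

theorem span_e (f : Weyl K) : f ∈ Submodule.span K (Set.range (e K)) := by
  have key : ∀ (x : FreeAlgebra K Bool) (w : Weyl K), w ∈ Submodule.span K (Set.range (e K)) →
      mk K x * w ∈ Submodule.span K (Set.range (e K)) := by
    intro x
    induction x using FreeAlgebra.induction with
    | grade0 r =>
      intro w hw
      have : mk K (algebraMap K _ r)
        = algebraMap K (Weyl K) r := AlgHom.commutes _ _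
      rw [this, ← Algebra.smul_def]
      exact Submodule.smul_mem _ _ hw
    | grade1 b =>
      intro w hw
      refine Submodule.span_induction (p := fun w _ =>
        mk K (FreeAlgebra.ι K b) * w ∈
          Submodule.span K (Set.range (e K))) ?_ ?_ ?_ ?_ hw
      · rintro _ ⟨d, rfl⟩
        cases b
        · change Wp K * _ ∈ _
          rw [p_mul_e]
          exact Submodule.subset_span ⟨_, rfl⟩
        · change Wq K * _ ∈ _
          rw [q_mul_e]
          exact add_mem (Submodule.subset_span ⟨_, rfl⟩)
            (Submodule.smul_mem _ _ (Submodule.subset_span ⟨_, rfl⟩))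
      · rw [mul_zero]; exact zero_mem _
      · intro x y _ _ hx hy; rw [mul_add]; exact add_mem hx hy
      · intro c x _ hx; rw [mul_smul_comm]; exact Submodule.smul_mem _ _ hx
    | mul x y hx hy =>
      intro w hw
      have : mk K (x * y) =
        mk K x *
        mk K y := map_mul (mk K) _ _
      rw [this, mul_assoc]
      exact hx _ (hy _ hw)
    | add x y hx hy =>
      intro w hw
      have : mk K (x + y) =
        mk K x +
        mk K y := map_add (mk K) _ _
      rw [this, add_mul]
      exact add_mem (hx _ hw) (hy _ hw)
  obtain ⟨x, rfl⟩ := (RingQuot.mkAlgHom_surjective K (WeylRel K) : Function.Surjective (mk K)) f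
  have := key x 1 (Submodule.subset_span ⟨0, e_zero⟩)
  rwa [mul_one] at this

/-- `a` is the leading exponent of `f` -/
def Lead (ρ σ : ℝ) (f : Weyl K) (a : ℕ × ℕ) : Prop :=
  ∃ c : K, c ≠ 0 ∧ f - c • e K a ∈ L K ρ σ a

theorem exists_lead (ρ σ : ℝ) {f : Weyl K} (hf : f ≠ 0) : ∃ a, Lead ρ σ f a := by
  obtain ⟨c, rfl⟩ := Finsupp.mem_span_range_iff_exists_finsupp.1 (span_e f)
  have hne : c.support.Nonempty := by
    rw [Finset.nonempty_iff_ne_empty]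
    intro h0
    apply hf
    simp [Finsupp.sum, h0]
  obtain ⟨a, ha, hmax⟩ := Finset.exists_max_image c.support (key ρ σ) hne
  refine ⟨a, c a, Finsupp.mem_support_iff.1 ha, ?_⟩
  rw [Finsupp.sum, ← Finset.add_sum_erase _ _ ha, add_sub_cancel_left]
  refine Submodule.sum_mem _ fun b hb => Submodule.smul_mem _ _ (e_mem ?_)
  rw [Finset.mem_erase] at hb
  exact lt_of_le_of_ne (hmax b hb.2) fun hh => hb.1 (key_inj _ _ hh)

theorem lead_mem {ρ σ : ℝ} {f : Weyl K} {a b : ℕ × ℕ} (hf : Lead ρ σ f a)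
    (hb : key ρ σ a < key ρ σ b) : f ∈ L K ρ σ b := by
  obtain ⟨c, _, hc⟩ := hf
  have := add_mem (L_mono hb.le hc) (Submodule.smul_mem _ c (e_mem hb))
  rwa [sub_add_cancel] at this

theorem lead_notMem {ρ σ : ℝ} {f : Weyl K} {a : ℕ × ℕ} (hf : Lead ρ σ f a) :
    f ∉ L K ρ σ a := by
  obtain ⟨c, hc0, hc⟩ := hf
  intro hh
  have := sub_mem hh hc
  rw [sub_sub_cancel] at this
  exact e_notMem a ((Submodule.smul_mem_iff _ hc0).1 this)

theorem lead_unique {ρ σ : ℝ} {f : Weyl K} {a b : ℕ × ℕ} (ha : Lead ρ σ f a)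
    (hb : Lead ρ σ f b) : a = b := by
  rcases lt_trichotomy (key ρ σ a) (key ρ σ b) with h | h | h
  · exact (lead_notMem hb (lead_mem ha h)).elim
  · exact key_inj _ _ h
  · exact (lead_notMem ha (lead_mem hb h)).elim

theorem lead_ne {ρ σ : ℝ} {f : Weyl K} {a : ℕ × ℕ} (ha : Lead ρ σ f a) : f ≠ 0 := by
  rintro rfl
  exact lead_notMem ha (zero_mem _)

theorem lead_mul {ρ σ : ℝ} (h : 0 ≤ ρ + σ) {f g : Weyl K} {a b : ℕ × ℕ} (ha : Lead ρ σ f a)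
    (hb : Lead ρ σ g b) : Lead ρ σ (f * g) (a + b) := by
  obtain ⟨c, hc0, hc⟩ := ha
  obtain ⟨d, hd0, hd⟩ := hb
  refine ⟨c * d, mul_ne_zero hc0 hd0, ?_⟩
  have h1 := L_mul_L h hc hd
  have h2 := Submodule.smul_mem _ c (e_mul_L (a := a) h hd)
  have h3 := Submodule.smul_mem _ d (L_mul_e (b := b) h hc)
  have h4 := Submodule.smul_mem _ (c * d) (e_mul_e (K := K) h a b)
  have := add_mem (add_mem h1 h2) (add_mem h3 h4)
  convert this using 1
  simp only [mul_sub, sub_mul, smul_sub, mul_smul_comm, smul_mul_assoc, smul_smul, mul_comm d c]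
  abel

theorem lead_add {ρ σ : ℝ} {f g : Weyl K} {a b w : ℕ × ℕ} (ha : Lead ρ σ f a)
    (hb : Lead ρ σ g b) (hw : Lead ρ σ (f + g) w) :
    key ρ σ w ≤ key ρ σ a ∨ key ρ σ w ≤ key ρ σ b := by
  by_contra! hh
  exact lead_notMem hw (add_mem (lead_mem ha hh.1) (lead_mem hb hh.2))

open Classical in
/-- the degree map -/
def u (ρ σ : ℝ) (f : Weyl K) : WithBot ℝ :=
  if hf : f = 0 then ⊥ else
    ((ρ * (exists_lead ρ σ hf).choose.1 + σ * (exists_lead ρ σ hf).choose.2 : ℝ) : WithBot ℝ)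

theorem u_zero (ρ σ : ℝ) : u ρ σ (0 : Weyl K) = ⊥ := by simp [u]

theorem u_lead {ρ σ : ℝ} {f : Weyl K} {a : ℕ × ℕ} (ha : Lead ρ σ f a) :
    u ρ σ f = ((ρ * a.1 + σ * a.2 : ℝ) : WithBot ℝ) := by
  have hf := lead_ne ha
  rw [u, dif_neg hf, lead_unique (exists_lead ρ σ hf).choose_spec ha]

theorem lead_smul_e (ρ σ : ℝ) {c : K} (hc : c ≠ 0) (a : ℕ × ℕ) : Lead ρ σ (c • e K a) a :=
  ⟨c, hc, by rw [sub_self]; exact zero_mem _⟩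

theorem u_isDegreeMap {ρ σ : ℝ} (h : 0 ≤ ρ + σ) : IsDegreeMap (u (K := K) ρ σ) where
  map_mul f g := by
    by_cases hf : f = 0
    · simp [hf, u_zero]
    by_cases hg : g = 0
    · simp [hg, u_zero]
    obtain ⟨a, ha⟩ := exists_lead ρ σ hf
    obtain ⟨b, hb⟩ := exists_lead ρ σ hg
    rw [u_lead ha, u_lead hb, u_lead (lead_mul h ha hb), ← WithBot.coe_add]
    congr 1
    simp only [Prod.fst_add, Prod.snd_add]
    push_cast
    ring
  add_le f g := by
    by_cases hf : f = 0
    · simp [hf]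
    by_cases hg : g = 0
    · simp [hg]
    by_cases hfg : f + g = 0
    · simp [hfg, u_zero]
    obtain ⟨a, ha⟩ := exists_lead ρ σ hf
    obtain ⟨b, hb⟩ := exists_lead ρ σ hg
    obtain ⟨w, hw⟩ := exists_lead ρ σ hfg
    rw [u_lead ha, u_lead hb, u_lead hw, le_max_iff, WithBot.coe_le_coe, WithBot.coe_le_coe]
    exact (lead_add ha hb hw).imp key_fst_le key_fst_le
  bot_iff f := by
    constructor
    · intro hh
      by_contra hf
      obtain ⟨a, ha⟩ := exists_lead ρ σ hf
      rw [u_lead ha] at hh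
      exact WithBot.coe_ne_bot hh
    · rintro rfl
      exact u_zero _ _

end WeylAux

end


/-- for every `(ρ, σ) ∈ ℝ²` with `ρ + σ ≥ 0` there exists a degree map `u`
on the Weyl algebra `A₁(K)` over `K` with `u(p) = ρ` and `u(q) = σ`. -/
theorem exists_degreeMap_of_add_nonneg (K : Type*) [Field K] [CharZero K]
    (ρ σ : ℝ) (h : 0 ≤ ρ + σ) :
    ∃ u : Weyl K → WithBot ℝ, IsDegreeMap u ∧
      (∀ c : K, c ≠ 0 → u (algebraMap K (Weyl K) c) = 0) ∧
      u (Wp K) = (ρ : WithBot ℝ) ∧ u (Wq K) = (σ : WithBot ℝ) := by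
  refine ⟨WeylAux.u ρ σ, WeylAux.u_isDegreeMap h, ?_, ?_, ?_⟩
  · intro c hc
    have := WeylAux.u_lead (WeylAux.lead_smul_e ρ σ hc 0)
    rw [WeylAux.e_zero, ← Algebra.algebraMap_eq_smul_one] at this
    rw [this]
    simp
  · have := WeylAux.u_lead (WeylAux.lead_smul_e (K := K) ρ σ one_ne_zero (1, 0))
    simpa [WeylAux.e] using this
  · have := WeylAux.u_lead (WeylAux.lead_smul_e (K := K) ρ σ one_ne_zero (0, 1))
    simpa [WeylAux.e] using this
end

section
/- Let L be a field and let · be a deformed Laurent series product on L((T^{-1})). Then every nonzero element of L((T^{-1})) has a two-sided multiplicative inverse (so L((T^{-1})) with this product is a division ring), and the inversion map z ↦ z^{-1} is continuous with respect to the topology induced by the standard degree map. -/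
noncomputable section

open scoped Classical

/-- The generalized binomial coefficient `binom n k` for an integer `n` and natural `k`;
it equals `n (n-1) ⋯ (n-k+1) / k!` (an integer). -/
def zbinom (n : ℤ) (k : ℕ) : ℤ :=
  if 0 ≤ n then (n.toNat.choose k : ℤ) else (-1) ^ k * (((k : ℤ) - 1 - n).toNat.choose k : ℤ)

/-- The generalized binomial coefficient `a (a-1) ⋯ (a-k+1) / k!` in a field `K`
(of characteristic zero in all uses). -/
def gbinom {K : Type*} [Field K] (a : K) (k : ℕ) : K :=
  (∏ i ∈ Finset.range k, (a - (i : K))) / (k.factorial : K)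

/-- Inverse Laurent series over `L`: formal sums `Σ_{i ∈ ℤ} a_i T^i` whose support is
bounded above. -/
structure InvLaurent (L : Type*) [Zero L] where
  coeff : ℤ → L
  bdd' : ∃ N : ℤ, ∀ i : ℤ, N < i → coeff i = 0

namespace InvLaurent

variable {L : Type*} [Field L]

@[ext] theorem ext {f g : InvLaurent L} (h : ∀ i, f.coeff i = g.coeff i) : f = g := by
  cases f; cases g
  simp only [mk.injEq]
  funext i; exact h i

instance : Zero (InvLaurent L) := ⟨⟨fun _ => 0, ⟨0, fun _ _ => rfl⟩⟩⟩

instance : Add (InvLaurent L) :=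
  ⟨fun f g => ⟨fun i => f.coeff i + g.coeff i, by
    obtain ⟨N, hN⟩ := f.bdd'; obtain ⟨M, hM⟩ := g.bdd'
    exact ⟨max N M, fun i hi => by
      show f.coeff i + g.coeff i = 0
      rw [hN i (lt_of_le_of_lt (le_max_left _ _) hi),
        hM i (lt_of_le_of_lt (le_max_right _ _) hi), add_zero]⟩⟩⟩

instance : Neg (InvLaurent L) :=
  ⟨fun f => ⟨fun i => -f.coeff i, by
    obtain ⟨N, hN⟩ := f.bdd'
    exact ⟨N, fun i hi => by show -f.coeff i = 0; rw [hN i hi, neg_zero]⟩⟩⟩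

@[simp] lemma coeff_zero (i : ℤ) : (0 : InvLaurent L).coeff i = 0 := rfl
@[simp] lemma coeff_add (f g : InvLaurent L) (i : ℤ) :
    (f + g).coeff i = f.coeff i + g.coeff i := rfl
@[simp] lemma coeff_neg (f : InvLaurent L) (i : ℤ) : (-f).coeff i = -f.coeff i := rfl

instance : AddCommGroup (InvLaurent L) where
  add_assoc f g h := by ext i; simp [add_assoc]
  zero_add f := by ext i; simp
  add_zero f := by ext i; simp
  neg_add_cancel f := by ext i; simp
  add_comm f g := by ext i; simp [add_comm]
  nsmul := nsmulRec
  zsmul := zsmulRec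

@[simp] lemma coeff_sub (f g : InvLaurent L) (i : ℤ) :
    (f - g).coeff i = f.coeff i - g.coeff i := by
  rw [sub_eq_add_neg, coeff_add, coeff_neg, sub_eq_add_neg]

/-- The series `a T^n`. -/
def single (n : ℤ) (a : L) : InvLaurent L :=
  ⟨fun i => if i = n then a else 0, ⟨n, fun i hi => if_neg (by omega)⟩⟩

/-- The series `T^n`. -/
def T (L : Type*) [Field L] (n : ℤ) : InvLaurent L := single n 1

/-- Coefficientwise multiplication by a scalar `b ∈ L` on the left. -/
def lsmul (b : L) (f : InvLaurent L) : InvLaurent L :=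
  ⟨fun i => b * f.coeff i, by
    obtain ⟨N, hN⟩ := f.bdd'
    exact ⟨N, fun i hi => by show b * f.coeff i = 0; rw [hN i hi, mul_zero]⟩⟩

/-- The standard degree map, with values in `ℤ ∪ {-∞}`. -/
def deg (f : InvLaurent L) : WithBot ℤ :=
  if f = 0 then ⊥ else ↑(sSup {i : ℤ | f.coeff i ≠ 0})

lemma deg_eq_bot_iff (f : InvLaurent L) : deg f = ⊥ ↔ f = 0 := by
  unfold deg
  split
  · simpa
  · simp_all

lemma support_nonempty {f : InvLaurent L} (hf : f ≠ 0) :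
    {i : ℤ | f.coeff i ≠ 0}.Nonempty := by
  by_contra h
  rw [Set.not_nonempty_iff_eq_empty] at h
  apply hf
  ext i
  have : i ∉ ({i : ℤ | f.coeff i ≠ 0}) := by rw [h]; exact Set.notMem_empty i
  simpa using this

lemma support_bddAbove (f : InvLaurent L) : BddAbove {i : ℤ | f.coeff i ≠ 0} := by
  obtain ⟨N, hN⟩ := f.bdd'
  exact ⟨N, fun i hi => by by_contra h; exact hi (hN i (by omega))⟩

lemma le_deg {f : InvLaurent L} {i : ℤ} (h : f.coeff i ≠ 0) : (i : WithBot ℤ) ≤ deg f := by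
  have hf : f ≠ 0 := by
    intro h0; rw [h0] at h; exact h rfl
  rw [deg, if_neg hf]
  exact_mod_cast le_csSup (support_bddAbove f) h

lemma deg_neg (f : InvLaurent L) : deg (-f) = deg f := by
  unfold deg
  have h0 : -f = 0 ↔ f = 0 := by
    constructor
    · intro h; ext i
      have := congrArg (fun g => InvLaurent.coeff g i) h
      simp only [coeff_neg, coeff_zero, neg_eq_zero] at this
      simpa using this
    · intro h; rw [h]; ext i; simp
  have hs : {i : ℤ | (-f).coeff i ≠ 0} = {i : ℤ | f.coeff i ≠ 0} := by
    ext i; simp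
  rw [hs]
  by_cases h : f = 0
  · rw [if_pos (h0.mpr h), if_pos h]
  · rw [if_neg (fun hh => h (h0.mp hh)), if_neg h]

lemma deg_add_le (f g : InvLaurent L) : deg (f + g) ≤ max (deg f) (deg g) := by
  by_cases h : f + g = 0
  · rw [(deg_eq_bot_iff _).mpr h]; exact bot_le
  · rw [deg, if_neg h]
    have hne := support_nonempty h
    have : sSup {i : ℤ | (f + g).coeff i ≠ 0} ∈ {i : ℤ | (f + g).coeff i ≠ 0} := by
      obtain ⟨N, hN⟩ := support_bddAbove (f + g)
      obtain ⟨m, hm, hmax⟩ := Int.exists_greatest_of_bdd ⟨N, fun i hi => hN hi⟩ hne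
      have : sSup {i : ℤ | (f + g).coeff i ≠ 0} = m :=
        le_antisymm (csSup_le hne hmax) (le_csSup (support_bddAbove _) hm)
      rw [this]; exact hm
    set m := sSup {i : ℤ | (f + g).coeff i ≠ 0} with hm
    have hc : (f + g).coeff m ≠ 0 := this
    rw [coeff_add] at hc
    rcases (by by_contra hh; push_neg at hh; rw [hh.1, hh.2, add_zero] at hc; exact hc rfl :
        f.coeff m ≠ 0 ∨ g.coeff m ≠ 0) with hf | hg
    · exact le_trans (le_deg hf) (le_max_left _ _)
    · exact le_trans (le_deg hg) (le_max_right _ _)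

/-- real-exponential of a degree value: `e^d`, with `e^{-∞} = 0`. -/
def edeg : WithBot ℤ → ℝ
  | ⊥ => 0
  | (n : ℤ) => Real.exp n

lemma edeg_nonneg (d : WithBot ℤ) : 0 ≤ edeg d := by
  cases d with
  | bot => exact le_refl 0
  | coe n => exact le_of_lt (Real.exp_pos _)

lemma edeg_mono {d d' : WithBot ℤ} (h : d ≤ d') : edeg d ≤ edeg d' := by
  cases d with
  | bot => exact edeg_nonneg d'
  | coe n =>
    cases d' with
    | bot => exact absurd h (by simp)
    | coe m =>
      have : n ≤ m := by exact_mod_cast h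
      exact Real.exp_le_exp.mpr (by exact_mod_cast this)

lemma edeg_eq_zero_iff (d : WithBot ℤ) : edeg d = 0 ↔ d = ⊥ := by
  cases d with
  | bot => simp [edeg]
  | coe n =>
    simp only [edeg]
    constructor
    · intro h; exact absurd h (ne_of_gt (Real.exp_pos _))
    · intro h; exact absurd h (by simp)

noncomputable instance : MetricSpace (InvLaurent L) where
  dist f g := edeg (deg (f - g))
  dist_self f := by
    show edeg (deg (f - f)) = 0
    rw [sub_self, (deg_eq_bot_iff (0 : InvLaurent L)).mpr rfl]
    rfl
  dist_comm f g := by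
    show edeg (deg (f - g)) = edeg (deg (g - f))
    have h : g - f = -(f - g) := by abel
    rw [h, deg_neg]
  dist_triangle f g h := by
    show edeg (deg (f - h)) ≤ edeg (deg (f - g)) + edeg (deg (g - h))
    have h1 : f - h = (f - g) + (g - h) := by abel
    have h2 : deg (f - h) ≤ max (deg (f - g)) (deg (g - h)) := by
      rw [h1]; exact deg_add_le _ _
    calc edeg (deg (f - h)) ≤ edeg (max (deg (f - g)) (deg (g - h))) := edeg_mono h2
      _ ≤ edeg (deg (f - g)) + edeg (deg (g - h)) := by
          rcases max_cases (deg (f - g)) (deg (g - h)) with ⟨hm, _⟩ | ⟨hm, _⟩ <;> rw [hm]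
          · exact le_add_of_nonneg_right (edeg_nonneg _)
          · exact le_add_of_nonneg_left (edeg_nonneg _)
  eq_of_dist_eq_zero := by
    intro f g hd
    have hd' : edeg (deg (f - g)) = 0 := hd
    have : deg (f - g) = ⊥ := (edeg_eq_zero_iff _).mp hd'
    have := (deg_eq_bot_iff _).mp this
    exact sub_eq_zero.mp this

end InvLaurent

open InvLaurent

/-- A deformed Laurent series product on `L((T⁻¹))`:
an associative, distributive, jointly continuous multiplication which restricts to left
scalar multiplication by `L`, satisfies `T^i · T^j = T^{i+j}`, and is compatible with the
standard degree map. -/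
structure DeformedProduct (L : Type*) [Field L] where
  mul : InvLaurent L → InvLaurent L → InvLaurent L
  mul_assoc : ∀ f g h, mul (mul f g) h = mul f (mul g h)
  left_distrib : ∀ f g h, mul f (g + h) = mul f g + mul f h
  right_distrib : ∀ f g h, mul (f + g) h = mul f h + mul g h
  continuous_mul : Continuous fun p : InvLaurent L × InvLaurent L => mul p.1 p.2
  lsmul_eq : ∀ (b : L) (f : InvLaurent L), mul (single 0 b) f = lsmul b f
  T_mul_T : ∀ i j : ℤ, mul (T L i) (T L j) = T L (i + j)
  deg_mul : ∀ f g, deg (mul f g) = deg f + deg g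

/-- `HasDelta μ δ` says that `T · a = a T + Σ_{i ≤ 0} δ_i(a) T^i` for all `a ∈ L`. -/
def HasDelta {L : Type*} [Field L] (μ : DeformedProduct L) (δ : ℤ → L → L) : Prop :=
  ∀ (a : L) (i : ℤ), (μ.mul (T L 1) (single 0 a)).coeff i =
    if i = 1 then a else if i ≤ 0 then δ i a else 0

/-- Composition `δ_{j₁} ∘ ⋯ ∘ δ_{j_k}` along a list `[j₁, …, j_k]`. -/
def dcomp {L : Type*} [Field L] (δ : ℤ → L → L) : List ℤ → L → L
  | [], a => a
  | j :: js, a => δ j (dcomp δ js a)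

/-- The Leibniz-type identity (★) for the family `δ_i`, `i ≤ 0`. -/
def LeibnizStar {L : Type*} [Field L] (δ : ℤ → L → L) : Prop :=
  ∀ i : ℤ, i ≤ 0 → ∀ a b : L,
    δ i (a * b) = a * δ i b + δ i a * b +
      ∑ᶠ p : ℤ × List ℤ,
        if p.1 ≤ 0 ∧ p.2 ≠ [] ∧ (∀ j ∈ p.2, j ≤ 0) ∧
            p.2.sum - (p.2.length : ℤ) + p.1 = i
        then zbinom p.1 p.2.length • (δ p.1 a * dcomp δ p.2 b) else 0

end

namespace InvLaurent

variable {L : Type*} [Field L]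

lemma deg_le_iff (f : InvLaurent L) (n : ℤ) :
    deg f ≤ (n : WithBot ℤ) ↔ ∀ i, n < i → f.coeff i = 0 := by
  constructor
  · intro h i hi
    by_contra hc
    have := (le_deg hc).trans h
    have : i ≤ n := by exact_mod_cast this
    omega
  · intro h
    by_cases hf : f = 0
    · rw [(deg_eq_bot_iff _).mpr hf]; exact bot_le
    · rw [deg, if_neg hf]
      have : sSup {i : ℤ | f.coeff i ≠ 0} ≤ n :=
        csSup_le (support_nonempty hf) (fun i hi => by
          by_contra hc; exact hi (h i (by omega)))
      exact_mod_cast this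

lemma exists_lead {f : InvLaurent L} (hf : f ≠ 0) :
    ∃ n : ℤ, deg f = n ∧ f.coeff n ≠ 0 := by
  obtain ⟨N, hN⟩ := support_bddAbove f
  obtain ⟨m, hm, hmax⟩ := Int.exists_greatest_of_bdd ⟨N, fun i hi => hN hi⟩ (support_nonempty hf)
  refine ⟨m, le_antisymm ((deg_le_iff f m).2 ?_) (le_deg hm), hm⟩
  intro i hi
  by_contra hc
  have := hmax i hc
  omega

lemma deg_T (n : ℤ) : deg (T L n) = n := by
  refine le_antisymm ((deg_le_iff _ _).2 fun i hi => ?_) (le_deg ?_)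
  · exact if_neg (by omega)
  · show (if n = n then (1 : L) else 0) ≠ 0
    simp

lemma edeg_add (a b : WithBot ℤ) : edeg (a + b) = edeg a * edeg b := by
  cases a with
  | bot => simp [edeg]
  | coe m =>
    cases b with
    | bot => simp [edeg]
    | coe n =>
      rw [← WithBot.coe_add]
      simp [edeg, Real.exp_add]

/-- The ring structure given by a deformed product. -/
@[reducible] def dring (μ : DeformedProduct L) : Ring (InvLaurent L) :=
  { (inferInstance : AddCommGroup (InvLaurent L)) with
    mul := μ.mul
    one := T L 0
    mul_assoc := μ.mul_assoc
    left_distrib := μ.left_distrib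
    right_distrib := μ.right_distrib
    zero_mul := fun f => by
      show μ.mul 0 f = 0
      have h := μ.right_distrib 0 0 f
      rw [add_zero] at h
      exact left_eq_add.mp h
    mul_zero := fun f => by
      show μ.mul f 0 = 0
      have h := μ.left_distrib f 0 0
      rw [add_zero] at h
      exact left_eq_add.mp h
    one_mul := fun f => by
      show μ.mul (single 0 1) f = f
      rw [μ.lsmul_eq]
      ext i
      exact one_mul _
    mul_one := fun f => by
      show μ.mul f (T L 0) = f
      have h := μ.right_distrib (μ.mul f (T L 0) - f) f (T L 0)
      rw [sub_add_cancel, μ.mul_assoc, μ.T_mul_T, add_zero] at h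
      have h2 := right_eq_add.mp h
      have h3 := μ.deg_mul (μ.mul f (T L 0) - f) (T L 0)
      rw [h2, deg_T, (deg_eq_bot_iff _).mpr rfl] at h3
      have h4 : deg (μ.mul f (T L 0) - f) = ⊥ := by
        cases hd : deg (μ.mul f (T L 0) - f) with
        | bot => rfl
        | coe m =>
          rw [hd, ← WithBot.coe_add] at h3
          exact absurd h3.symm (WithBot.coe_ne_bot)
      exact sub_eq_zero.mp ((deg_eq_bot_iff _).mp h4) }

lemma exists_left_inv (μ : DeformedProduct L) (z : InvLaurent L) (hz : z ≠ 0) :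
    ∃ w, μ.mul w z = T L 0 := by
  letI := dring μ
  have hdm : ∀ f g : InvLaurent L, deg (f * g) = deg f + deg g := μ.deg_mul
  have hd1 : deg (1 : InvLaurent L) = 0 := deg_T 0
  obtain ⟨n, hn, -⟩ := exists_lead hz
  have hd : deg (T L (-n) * z) = ((0 : ℤ) : WithBot ℤ) := by
    rw [hdm, deg_T, hn, ← WithBot.coe_add]; simp
  have hne : T L (-n) * z ≠ 0 := by
    intro h
    rw [(deg_eq_bot_iff _).mpr h] at hd
    exact absurd hd.symm WithBot.coe_ne_bot
  obtain ⟨m, hm, hb⟩ := exists_lead hne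
  obtain rfl : m = 0 := by
    rw [hd] at hm; exact (WithBot.coe_injective hm).symm
  set b := (T L (-n) * z).coeff 0 with hbdef
  set v : InvLaurent L := single 0 b⁻¹ * T L (-n) with hv
  have hvz : v * z = lsmul b⁻¹ (T L (-n) * z) := by
    rw [hv, mul_assoc]; exact μ.lsmul_eq _ _
  set u : InvLaurent L := 1 - v * z with hu
  have hdu : deg u ≤ ((-1 : ℤ) : WithBot ℤ) := by
    rw [deg_le_iff]
    intro i hi
    have e1 : u.coeff i = (T L 0).coeff i - b⁻¹ * (T L (-n) * z).coeff i := by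
      rw [hu, hvz]; exact coeff_sub _ _ _
    rw [e1]
    rcases eq_or_ne i 0 with rfl | h0
    · rw [← hbdef, inv_mul_cancel₀ hb]
      show (if (0 : ℤ) = 0 then (1 : L) else 0) - 1 = 0
      simp
    · rw [(deg_le_iff _ 0).1 hd.le i (by omega)]
      show (if i = 0 then (1 : L) else 0) - _ = 0
      simp [h0]
  have hpow : ∀ k : ℕ, deg (u ^ k) ≤ ((-(k : ℤ) : ℤ) : WithBot ℤ) := by
    intro k
    induction k with
    | zero => rw [pow_zero, hd1]; simp
    | succ k ih =>
      rw [pow_succ, hdm]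
      refine (add_le_add ih hdu).trans ?_
      rw [← WithBot.coe_add]
      apply le_of_eq
      congr 1
      push_cast; ring
  let s : ℕ → InvLaurent L := fun k => ∑ i ∈ Finset.range k, u ^ i
  have hs : ∀ k, s k * (1 - u) = 1 - u ^ k := fun k => geom_sum_mul_neg u k
  have hsucc : ∀ k, s (k + 1) = s k + u ^ k := fun k => Finset.sum_range_succ _ _
  -- stabilization
  have hstab : ∀ (i : ℤ) (k l : ℕ), k ≤ l → -(k : ℤ) < i → (s l).coeff i = (s k).coeff i := by
    intro i k l hkl hi
    induction l, hkl using Nat.le_induction with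
    | base => rfl
    | succ l hl ih =>
      rw [hsucc]
      have e : (s l + u ^ l).coeff i = (s l).coeff i + (u ^ l).coeff i := coeff_add _ _ _
      rw [e, ih, (deg_le_iff _ _).1 (hpow l) i (by omega), add_zero]
  let S : InvLaurent L := ⟨fun i => (s (1 - i).toNat).coeff i, 0, fun i hi => by
    have e : (1 - i).toNat = 0 := by omega
    rw [e]
    show (∑ i ∈ Finset.range 0, u ^ i : InvLaurent L).coeff i = 0
    rw [Finset.sum_range_zero]; rfl⟩
  have hS : ∀ k : ℕ, deg (S - s k) ≤ ((-(k : ℤ) : ℤ) : WithBot ℤ) := by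
    intro k
    rw [deg_le_iff]
    intro i hi
    have e : (S - s k).coeff i = (s (1 - i).toNat).coeff i - (s k).coeff i := coeff_sub _ _ _
    rw [e, sub_eq_zero]
    rcases le_total (1 - i).toNat k with h | h
    · exact (hstab i _ _ h (by omega)).symm
    · exact hstab i _ _ h hi
  have hd1u : deg (1 - u) = 0 := by
    have : (1 : InvLaurent L) - u = v * z := by rw [hu]; abel
    rw [this, hv, mul_assoc, hdm, hd]
    have hsing : deg (single 0 b⁻¹ : InvLaurent L) = ((0 : ℤ) : WithBot ℤ) := by
      refine le_antisymm ((deg_le_iff _ _).2 fun i hi => ?_) (le_deg ?_)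
      · exact if_neg (by omega)
      · show (if (0 : ℤ) = 0 then b⁻¹ else 0) ≠ 0
        simpa using hb
    rw [hsing]; rfl
  have hfin : S * (1 - u) = 1 := by
    have key : ∀ k : ℕ, deg (S * (1 - u) - 1) ≤ ((-(k : ℤ) : ℤ) : WithBot ℤ) := by
      intro k
      have e : S * (1 - u) - 1 = (S - s k) * (1 - u) + -(u ^ k) := by
        rw [sub_mul, hs]; abel
      rw [e]
      refine (deg_add_le _ _).trans (max_le ?_ ?_)
      · rw [hdm, hd1u, add_zero]; exact hS k
      · rw [deg_neg]; exact hpow k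
    rw [← sub_eq_zero]
    refine InvLaurent.ext fun i => ?_
    exact (deg_le_iff _ _).1 (key (1 - i).toNat) i (by omega)
  refine ⟨S * v, ?_⟩
  show S * v * z = 1
  have : (1 : InvLaurent L) - u = v * z := by rw [hu]; abel
  rw [mul_assoc, ← this, hfin]

end InvLaurent

open InvLaurent in
/-- for any deformed Laurent series product on `L((T⁻¹))`, every nonzero element
has a two-sided multiplicative inverse (the identity being `T^0 = 1`), and the inversion map
is continuous on the set of nonzero elements (w.r.t. the topology of the standard degree map). -/
theorem deformedProduct_inv_exists_and_continuous (L : Type*) [Field L]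
    (μ : DeformedProduct L) :
    ∃ inv : InvLaurent L → InvLaurent L,
      (∀ z : InvLaurent L, z ≠ 0 → μ.mul z (inv z) = T L 0 ∧ μ.mul (inv z) z = T L 0) ∧
      ContinuousOn inv {z : InvLaurent L | z ≠ 0} := by
  letI := dring μ
  have hdm : ∀ f g : InvLaurent L, deg (f * g) = deg f + deg g := μ.deg_mul
  have hT1 : (1 : InvLaurent L) ≠ 0 := by
    intro h
    have h1 : deg (1 : InvLaurent L) = ((0 : ℤ) : WithBot ℤ) := deg_T 0
    rw [(deg_eq_bot_iff _).mpr h] at h1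
    exact absurd h1.symm WithBot.coe_ne_bot
  have hex : ∀ z : InvLaurent L, ∃ w : InvLaurent L, z ≠ 0 → w * z = 1 := by
    intro z
    by_cases hz : z = 0
    · exact ⟨0, fun h => absurd hz h⟩
    · obtain ⟨w, hw⟩ := exists_left_inv μ z hz
      exact ⟨w, fun _ => hw⟩
  choose inv hinv using hex
  have hright : ∀ z : InvLaurent L, z ≠ 0 → z * inv z = 1 := by
    intro z hz
    have hw : inv z ≠ 0 := by
      intro h
      have := hinv z hz
      rw [h, zero_mul] at this
      exact hT1 this.symm
    have h1 := hinv (inv z) hw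
    have h2 : inv (inv z) = z := by
      calc inv (inv z) = inv (inv z) * (inv z * z) := by rw [hinv z hz, mul_one]
        _ = z := by rw [← mul_assoc, h1, one_mul]
    rw [h2] at h1
    exact h1
  refine ⟨inv, fun z hz => ⟨hright z hz, hinv z hz⟩, ?_⟩
  have hN : ∀ f g : InvLaurent L, edeg (deg (f * g)) = edeg (deg f) * edeg (deg g) := by
    intro f g; rw [hdm, edeg_add]
  have hdist : ∀ f g : InvLaurent L, dist f g = edeg (deg (f - g)) := fun _ _ => rfl
  have hpos : ∀ f : InvLaurent L, f ≠ 0 → 0 < edeg (deg f) := by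
    intro f hf
    refine lt_of_le_of_ne (edeg_nonneg _) (fun h => hf ?_)
    exact (deg_eq_bot_iff _).mp ((edeg_eq_zero_iff _).mp h.symm)
  rw [Metric.continuousOn_iff]
  intro z hz ε hε
  have hz0 : z ≠ 0 := hz
  set r := edeg (deg z) with hr
  have hrp : 0 < r := hpos z hz0
  refine ⟨min (r / 2) (ε * (r * r) / 2), by positivity, fun y hy hyz => ?_⟩
  have hy0 : y ≠ 0 := hy
  have h1 : dist y z < r / 2 := lt_of_lt_of_le hyz (min_le_left _ _)
  have h2 : dist y z < ε * (r * r) / 2 := lt_of_lt_of_le hyz (min_le_right _ _)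
  have e0 : ∀ f : InvLaurent L, dist f 0 = edeg (deg f) := by
    intro f; rw [hdist, sub_zero]
  have h3 : r / 2 < edeg (deg y) := by
    have := dist_triangle z y 0
    rw [e0, e0, dist_comm z y, ← hr] at this
    linarith
  have key : y * (inv y - inv z) * z = z - y := by
    rw [mul_sub, sub_mul, hright y hy0, mul_assoc, hinv z hz0, one_mul, mul_one]
  have h4 : edeg (deg y) * dist (inv y) (inv z) * r = dist y z := by
    rw [dist_comm y z, hdist z y, ← key, hN, hN, hdist]
  have hd0 : 0 ≤ dist (inv y) (inv z) := dist_nonneg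
  by_contra hcon
  push Not at hcon
  have h5 : r / 2 * ε ≤ edeg (deg y) * dist (inv y) (inv z) :=
    mul_le_mul h3.le hcon hε.le (by linarith)
  have h6 := mul_le_mul_of_nonneg_right h5 hrp.le
  rw [h4] at h6
  nlinarith
end

section
/- Let L be a field and let · be a deformed Laurent series product on L((T^{-1})). For a ∈ L and i ∈ ℤ let δ_i(a) ∈ L be the coefficient of T^i in T·a; then δ_i(a) = 0 for i > 1 (so T·a = δ_1(a)T + Σ_{i≤0} δ_i(a)T^i), each δ_i : L → L is additive, and δ_1 : L → L is an injective ring homomorphism. -/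
namespace InvLaurent

lemma coeff_deg_ne {L : Type*} [Field L] {f : InvLaurent L} {n : ℤ} (h : deg f = (n : WithBot ℤ)) :
    f.coeff n ≠ 0 := by
  have hf : f ≠ 0 := by
    intro h0
    rw [(deg_eq_bot_iff f).mpr h0] at h
    exact absurd h (by simp)
  rw [deg, if_neg hf] at h
  have h' : sSup {i : ℤ | f.coeff i ≠ 0} = n := by exact_mod_cast h
  have := Int.csSup_mem (support_nonempty hf) (support_bddAbove f)
  rw [h'] at this
  exact this

lemma coeff_eq_zero_of_deg_lt {L : Type*} [Field L] {f : InvLaurent L} {n : ℤ}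
    (h : deg f < (n : WithBot ℤ)) : f.coeff n = 0 := by
  by_contra hc
  exact absurd (le_deg hc) (not_le.mpr h)

lemma deg_le_of {L : Type*} [Field L] {f : InvLaurent L} {n : ℤ}
    (h : ∀ i, n < i → f.coeff i = 0) : deg f ≤ (n : WithBot ℤ) := by
  by_cases hf : f = 0
  · rw [(deg_eq_bot_iff f).mpr hf]; exact bot_le
  · rw [deg, if_neg hf]
    have := csSup_le (support_nonempty hf) (a := n) (fun i hi => by
      by_contra hlt
      exact hi (h i (by omega)))
    exact_mod_cast this

lemma deg_single {L : Type*} [Field L] (n : ℤ) {a : L} (ha : a ≠ 0) :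
    deg (single n a) = (n : WithBot ℤ) := by
  apply le_antisymm
  · exact deg_le_of (fun i hi => if_neg (by omega))
  · exact le_deg (by simpa [single] using ha)

lemma deg_single_zero_le {L : Type*} [Field L] (a : L) :
    deg (single 0 a) ≤ ((0 : ℤ) : WithBot ℤ) :=
  deg_le_of (fun i hi => if_neg (by omega))

end InvLaurent

open InvLaurent in
/-- for a deformed Laurent series product on `L((T⁻¹))`, write
`δ_i(a)` for the coefficient of `T^i` in `T · a`.  Then `δ_i(a) = 0` for `i > 1`
(so `T·a = δ₁(a)T + Σ_{i≤0} δ_i(a)T^i`), each `δ_i` is additive, and `δ₁` is an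
injective ring homomorphism `L → L`. -/
theorem deformedProduct_delta_basic (L : Type*) [Field L] (μ : DeformedProduct L)
    (δ : ℤ → L → L) (hδdef : ∀ (i : ℤ) (a : L), δ i a = (μ.mul (T L 1) (single 0 a)).coeff i) :
    (∀ i : ℤ, 1 < i → ∀ a : L, δ i a = 0) ∧
    (∀ (i : ℤ) (a b : L), δ i (a + b) = δ i a + δ i b) ∧
    (∀ a b : L, δ 1 (a * b) = δ 1 a * δ 1 b) ∧ δ 1 1 = 1 ∧
    Function.Injective (δ 1) := by
  have hdT : deg (T L 1) = ((1 : ℤ) : WithBot ℤ) := deg_single 1 one_ne_zero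
  have hle : ∀ a : L, deg (μ.mul (T L 1) (single 0 a)) ≤ ((1 : ℤ) : WithBot ℤ) := by
    intro a
    rw [μ.deg_mul, hdT]
    calc ((1 : ℤ) : WithBot ℤ) + deg (single 0 a)
        ≤ ((1 : ℤ) : WithBot ℤ) + ((0 : ℤ) : WithBot ℤ) := by
          gcongr
          exact deg_single_zero_le a
      _ = ((1 : ℤ) : WithBot ℤ) := by norm_cast
  have hgt : ∀ i : ℤ, 1 < i → ∀ a : L, δ i a = 0 := by
    intro i hi a
    rw [hδdef]
    exact coeff_eq_zero_of_deg_lt (lt_of_le_of_lt (hle a) (by exact_mod_cast hi))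
  have hadd : ∀ (i : ℤ) (a b : L), δ i (a + b) = δ i a + δ i b := by
    intro i a b
    have h : single 0 (a + b) = single 0 a + single 0 b := by
      ext j
      simp only [single, coeff_add]
      split <;> simp
    rw [hδdef, hδdef, hδdef, h, μ.left_distrib, coeff_add]
  refine ⟨hgt, hadd, ?_, ?_, ?_⟩
  · intro a b
    set r : InvLaurent L := μ.mul (T L 1) (single 0 a) - lsmul (δ 1 a) (T L 1) with hr
    have hTa : μ.mul (T L 1) (single 0 a) = μ.mul (single 0 (δ 1 a)) (T L 1) + r := by
      rw [μ.lsmul_eq, hr]; abel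
    have hdr : deg r ≤ ((0 : ℤ) : WithBot ℤ) := by
      apply deg_le_of
      intro i hi
      rw [hr, coeff_sub, ← hδdef]
      by_cases h1 : i = 1
      · subst h1
        simp [lsmul, T, single]
      · rw [hgt i (by omega)]
        simp [lsmul, T, single, h1]
    have hdrb : deg (μ.mul r (single 0 b)) ≤ ((0 : ℤ) : WithBot ℤ) := by
      rw [μ.deg_mul]
      calc deg r + deg (single 0 b) ≤ ((0 : ℤ) : WithBot ℤ) + ((0 : ℤ) : WithBot ℤ) :=
            add_le_add hdr (deg_single_zero_le b)
        _ = ((0 : ℤ) : WithBot ℤ) := by norm_cast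
    have hab : single 0 (a * b) = μ.mul (single 0 a) (single 0 b) := by
      rw [μ.lsmul_eq]
      ext j
      simp [single, lsmul]
    rw [hδdef 1 (a * b), hab, ← μ.mul_assoc, hTa, μ.right_distrib, coeff_add,
      coeff_eq_zero_of_deg_lt (lt_of_le_of_lt hdrb (by exact_mod_cast Int.zero_lt_one)),
      add_zero, μ.mul_assoc, μ.lsmul_eq, hδdef 1 b]
    rfl
  · rw [hδdef]
    have : (single 0 1 : InvLaurent L) = T L 0 := rfl
    rw [this, μ.T_mul_T]
    simp [T, single]
  · intro a b hab
    by_contra hne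
    have hc : a - b ≠ 0 := sub_ne_zero.mpr hne
    have hd : deg (μ.mul (T L 1) (single 0 (a - b))) = ((1 : ℤ) : WithBot ℤ) := by
      rw [μ.deg_mul, hdT, deg_single 0 hc]
      norm_cast
    have h1 := coeff_deg_ne hd
    rw [← hδdef] at h1
    have h2 := hadd 1 (a - b) b
    rw [sub_add_cancel, hab] at h2
    exact h1 (by simpa using h2)
end

section
/- Let L be a field, let · be a deformed Laurent series product on L((T^{-1})), and suppose there are maps δ_i : L → L for i ∈ ℤ_{≤0} such that T·a = aT + Σ_{i≤0} δ_i(a)T^i for all a ∈ L. Then for every n ∈ ℤ and every a ∈ L: T^n · a = Σ_{k≥0} Σ_{(j_1,…,j_k)∈(ℤ_{≤0})^k} binom(n,k) δ_{j_1}⋯δ_{j_k}(a) T^{j_1+⋯+j_k−k+n}; that is, for each m ∈ ℤ the coefficient of T^m in T^n·a equals the sum of binom(n,k)·δ_{j_1}⋯δ_{j_k}(a) over all k ≥ 0 and all k-tuples of nonpositive integers (j_1,…,j_k) with j_1+⋯+j_k − k + n = m (a finite sum for each m since each summand requires j_1+⋯+j_k = m − n + k with all j_t ≤ 0). -/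
namespace DefLaurentAux

open InvLaurent

theorem zbinom_eq (n : ℤ) (k : ℕ) : zbinom n k = Ring.choose n k := by
  unfold zbinom
  split_ifs with h
  · obtain ⟨m, rfl⟩ := Int.eq_ofNat_of_zero_le h
    simp [Ring.choose_natCast]
  · obtain ⟨m, hm⟩ : ∃ m : ℕ, n = -((m : ℤ) + 1) := ⟨(-n - 1).toNat, by omega⟩
    subst hm
    rw [Ring.choose_neg]
    have h1 : ((m : ℤ) + 1 + k - 1) = ((m + k : ℕ) : ℤ) := by push_cast; ring
    have h2 : ((k : ℤ) - 1 - -((m : ℤ) + 1)).toNat = m + k := by omega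
    rw [h1, h2, Ring.choose_natCast]
    simp [Units.smul_def, Int.negOnePow_def]

theorem zbinom_zero_right (n : ℤ) : zbinom n 0 = 1 := by
  rw [zbinom_eq, Ring.choose_zero_right]

theorem zbinom_succ_succ (n : ℤ) (k : ℕ) :
    zbinom (n + 1) (k + 1) = zbinom n (k + 1) + zbinom n k := by
  simp only [zbinom_eq]
  rw [Ring.choose_succ_succ, add_comm]

/-- Lists of nonpositive integers with `length - sum = d`. -/
def C (d : ℤ) : Set (List ℤ) := {js | (∀ j ∈ js, j ≤ 0) ∧ (js.length : ℤ) - js.sum = d}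

theorem sum_nonpos (js : List ℤ) (h : ∀ j ∈ js, j ≤ 0) : js.sum ≤ 0 := by
  induction js with
  | nil => simp
  | cons j js ih =>
    have h1 := ih (fun i hi => h i (List.mem_cons_of_mem _ hi))
    have h2 := h j List.mem_cons_self
    simp only [List.sum_cons]; omega

theorem C_neg {d : ℤ} (hd : d < 0) : C d = ∅ := by
  ext js
  simp only [C, Set.mem_setOf_eq, Set.mem_empty_iff_false, iff_false, not_and]
  intro h
  have := sum_nonpos js h
  omega

/-- The nonempty lists in `C d`. -/
def C' (d : ℤ) : Set (List ℤ) :=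
  ⋃ j ∈ (Finset.Icc (1 - d) 0 : Set ℤ), List.cons j '' C (d - 1 + j)

theorem mem_C' (d : ℤ) (js : List ℤ) : js ∈ C' d ↔ js ∈ C d ∧ js ≠ [] := by
  simp only [C', Set.mem_iUnion, Set.mem_image, Finset.coe_Icc, Set.mem_Icc, exists_prop]
  constructor
  · rintro ⟨j, hj, l, ⟨hl, hl2⟩, rfl⟩
    refine ⟨⟨?_, ?_⟩, by simp⟩
    · intro i hi
      rcases List.mem_cons.1 hi with rfl | hi
      · exact hj.2
      · exact hl i hi
    · simp only [List.length_cons, List.sum_cons]; push_cast; omega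
  · rintro ⟨⟨h1, h2⟩, h3⟩
    cases js with
    | nil => exact absurd rfl h3
    | cons j l =>
      have hl : ∀ i ∈ l, i ≤ 0 := fun i hi => h1 i (List.mem_cons_of_mem _ hi)
      have hj := h1 j List.mem_cons_self
      have hs := sum_nonpos l hl
      simp only [List.length_cons, List.sum_cons] at h2
      push_cast at h2
      exact ⟨j, ⟨by omega, hj⟩, l, ⟨hl, by omega⟩, rfl⟩

theorem C_finite_aux (N : ℕ) : ∀ d : ℤ, d < N → (C d).Finite := by
  induction N with
  | zero => intro d hd; rw [C_neg (by simpa using hd)]; exact Set.finite_empty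
  | succ N ih =>
    intro d hd
    have h : (C' d).Finite := by
      apply Set.Finite.biUnion (Finset.finite_toSet _)
      intro j hj
      simp only [Finset.coe_Icc, Set.mem_Icc] at hj
      exact (ih _ (by push_cast at hd; omega)).image _
    refine (h.insert []).subset ?_
    intro js hjs
    by_cases h0 : js = []
    · exact Or.inl h0
    · exact Or.inr ((mem_C' d js).2 ⟨hjs, h0⟩)

theorem C_finite (d : ℤ) : (C d).Finite := C_finite_aux (d + 1).toNat d (by omega)

theorem C'_finite (d : ℤ) : (C' d).Finite :=
  (C_finite d).subset fun js h => ((mem_C' d js).1 h).1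

variable {L : Type*} [Field L]

/-- Weighted sum of compositions. -/
noncomputable def S (δ : ℤ → L → L) (w : ℕ → ℤ) (a : L) (d : ℤ) : L :=
  ∑ᶠ js ∈ C d, w js.length • dcomp δ js a

theorem S_neg (δ : ℤ → L → L) (w : ℕ → ℤ) (a : L) {d : ℤ} (hd : d < 0) : S δ w a d = 0 := by
  rw [S, C_neg hd, finsum_mem_empty]

theorem S_add (δ : ℤ → L → L) (w w' : ℕ → ℤ) (a : L) (d : ℤ) :
    S δ (fun k => w k + w' k) a d = S δ w a d + S δ w' a d := by
  simp only [S, add_smul]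
  exact finsum_mem_add_distrib (C_finite d)

theorem S_cons (δ : ℤ → L → L) (hadd : ∀ j ≤ 0, ∀ x y, δ j (x + y) = δ j x + δ j y)
    (w : ℕ → ℤ) (h0 : w 0 = 0) (a : L) (d : ℤ) :
    S δ w a d = ∑ j ∈ Finset.Icc (1 - d) 0, δ j (S δ (fun k => w (k + 1)) a (d - 1 + j)) := by
  have h1 : S δ w a d = ∑ᶠ js ∈ C' d, w js.length • dcomp δ js a := by
    apply finsum_mem_inter_support_eq'
    intro js hjs
    rw [mem_C']
    constructor
    · intro h
      refine ⟨h, ?_⟩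
      rintro rfl
      simp [h0] at hjs
    · exact fun h => h.1
  rw [h1, C', finsum_mem_biUnion, finsum_mem_coe_finset]
  · apply Finset.sum_congr rfl
    intro j hj
    rw [finsum_mem_image (List.cons_injective.injOn)]
    let D : L →+ L := AddMonoidHom.mk' (δ j) (hadd j (Finset.mem_Icc.1 hj).2)
    change _ = D (S δ (fun k => w (k + 1)) a (d - 1 + j))
    rw [S, AddMonoidHom.map_finsum_mem _ _ (C_finite _)]
    apply finsum_mem_congr rfl
    intro js _
    rw [map_zsmul]
    rfl
  · intro i _ j _ hij
    rw [Function.onFun, Set.disjoint_left]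
    rintro _ ⟨l, _, rfl⟩ ⟨l', _, h⟩
    exact hij (List.cons.inj h).1.symm
  · exact Finset.finite_toSet _
  · intro j _
    exact (C_finite _).image _

theorem S_zbinom_succ (δ : ℤ → L → L) (hadd : ∀ j ≤ 0, ∀ x y, δ j (x + y) = δ j x + δ j y)
    (n : ℤ) (a : L) (d : ℤ) :
    S δ (zbinom (n + 1)) a d = S δ (zbinom n) a d +
      ∑ j ∈ Finset.Icc (1 - d) 0, δ j (S δ (zbinom n) a (d - 1 + j)) := by
  have h : zbinom (n + 1) = fun k => zbinom n k + (fun k : ℕ => k.casesOn 0 (zbinom n)) k := by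
    funext k
    cases k with
    | zero => simp [zbinom_zero_right]
    | succ k => exact zbinom_succ_succ n k
  rw [h, S_add, S_cons δ hadd (fun k : ℕ => k.casesOn 0 (zbinom n)) rfl]

/-! The product side. -/

theorem deg_le_of {f : InvLaurent L} {N : ℤ} (h : ∀ i, N < i → f.coeff i = 0) :
    deg f ≤ (N : WithBot ℤ) := by
  by_cases hf : f = 0
  · rw [(deg_eq_bot_iff f).2 hf]; exact bot_le
  · rw [deg, if_neg hf]
    have : sSup {i : ℤ | f.coeff i ≠ 0} ≤ N := by
      apply csSup_le (support_nonempty hf)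
      intro i hi
      by_contra hc
      exact hi (h i (by omega))
    exact_mod_cast this

theorem coeff_of_deg_le {f : InvLaurent L} {N : ℤ} (h : deg f ≤ (N : WithBot ℤ)) (i : ℤ)
    (hi : N < i) : f.coeff i = 0 := by
  by_contra hc
  have := (le_deg hc).trans h
  have : i ≤ N := by exact_mod_cast this
  omega

theorem coeff_mul_zero (μ : DeformedProduct L) {f g : InvLaurent L} {M N : ℤ}
    (hf : ∀ i, M < i → f.coeff i = 0) (hg : ∀ i, N < i → g.coeff i = 0) (i : ℤ)
    (hi : M + N < i) : (μ.mul f g).coeff i = 0 := by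
  apply coeff_of_deg_le (N := M + N) _ i hi
  rw [μ.deg_mul]
  push_cast
  exact add_le_add (deg_le_of hf) (deg_le_of hg)

theorem coeff_single (n : ℤ) (a : L) (i : ℤ) : (single n a).coeff i = if i = n then a else 0 := by
  simp [single]

theorem coeff_T (n i : ℤ) : (T L n).coeff i = if i = n then 1 else 0 := coeff_single n 1 i

theorem coeff_T_zero (n i : ℤ) (h : n < i) : (T L n).coeff i = 0 := by
  rw [coeff_T, if_neg (by omega)]

theorem single_eq (μ : DeformedProduct L) (n : ℤ) (a : L) :
    single n a = μ.mul (single 0 a) (T L n) := by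
  rw [μ.lsmul_eq]
  ext i
  simp [lsmul, coeff_T, coeff_single]

theorem single_mul_T (μ : DeformedProduct L) (k n : ℤ) (a : L) :
    μ.mul (single k a) (T L n) = single (k + n) a := by
  rw [single_eq μ k, μ.mul_assoc, μ.T_mul_T, ← single_eq]

theorem split_top (f : InvLaurent L) (N : ℤ) (h : ∀ i, N < i → f.coeff i = 0) :
    ∃ g : InvLaurent L, f = single N (f.coeff N) + g ∧ (∀ i, N - 1 < i → g.coeff i = 0) ∧
      ∀ i, i < N → g.coeff i = f.coeff i := by
  refine ⟨f - single N (f.coeff N), by abel, ?_, ?_⟩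
  · intro i hi
    rw [coeff_sub, coeff_single]
    split_ifs with h1
    · rw [h1, sub_self]
    · rw [h i (by omega), sub_zero]
  · intro i hi
    rw [coeff_sub, coeff_single, if_neg (by omega), sub_zero]

theorem coeff_mul_T_aux (μ : DeformedProduct L) (n : ℤ) (d : ℕ) :
    ∀ (N : ℤ) (f : InvLaurent L), (∀ i, N < i → f.coeff i = 0) → ∀ m : ℤ, N - m < d →
      (μ.mul f (T L n)).coeff (m + n) = f.coeff m := by
  induction d with
  | zero =>
    intro N f hf m hm
    push_cast at hm
    rw [hf m (by omega), coeff_mul_zero μ hf (coeff_T_zero n) _ (by omega)]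
  | succ d ih =>
    intro N f hf m hm
    obtain ⟨g, h1, h2, h3⟩ := split_top f N hf
    rw [h1, μ.right_distrib, single_mul_T, coeff_add, coeff_add,
      ih (N - 1) g h2 m (by push_cast at hm; omega)]
    simp [coeff_single]

theorem coeff_mul_T (μ : DeformedProduct L) (n : ℤ) (f : InvLaurent L) (m : ℤ) :
    (μ.mul f (T L n)).coeff (m + n) = f.coeff m := by
  obtain ⟨N, hN⟩ := f.bdd'
  exact coeff_mul_T_aux μ n (N - m + 1).toNat N f hN m (by omega)

theorem coeff_T_mul_single (μ : DeformedProduct L) (δ : ℤ → L → L) (hδ : HasDelta μ δ)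
    (N : ℤ) (b : L) (m : ℤ) :
    (μ.mul (T L 1) (single N b)).coeff (m + N) =
      if m = 1 then b else if m ≤ 0 then δ m b else 0 := by
  rw [single_eq μ N, ← μ.mul_assoc, coeff_mul_T, hδ]

theorem delta_add (μ : DeformedProduct L) (δ : ℤ → L → L) (hδ : HasDelta μ δ) :
    ∀ j ≤ 0, ∀ x y, δ j (x + y) = δ j x + δ j y := by
  intro j hj x y
  have hs : single 0 (x + y) = single 0 x + single 0 y := by
    ext i
    simp only [coeff_add, coeff_single]
    split_ifs <;> simp
  have h := hδ (x + y) j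
  rw [hs, μ.left_distrib, coeff_add, hδ, hδ] at h
  have h1 : j ≠ 1 := by omega
  simp only [h1, hj, if_true, if_false] at h
  exact h.symm

theorem coeff_T_mul (μ : DeformedProduct L) (δ : ℤ → L → L) (hδ : HasDelta μ δ) (d : ℕ) :
    ∀ (N : ℤ) (f : InvLaurent L), (∀ i, N < i → f.coeff i = 0) →
      (μ.mul (T L 1) f).coeff (N + 1 - d) = f.coeff (N - d) +
        ∑ j ∈ Finset.Icc (1 - (d : ℤ)) 0, δ j (f.coeff (N - (d - 1 + j))) := by
  induction d with
  | zero =>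
    intro N f hf
    obtain ⟨g, h1, h2, h3⟩ := split_top f N hf
    have h4 := coeff_T_mul_single μ δ hδ N (f.coeff N) 1
    rw [if_pos rfl, add_comm] at h4
    conv_lhs => rw [h1]
    rw [μ.left_distrib, coeff_add]
    have h5 := coeff_mul_zero μ (coeff_T_zero (L := L) 1) h2 (N + 1) (by omega)
    simp [h4, h5]
  | succ d ih =>
    intro N f hf
    obtain ⟨g, h1, h2, h3⟩ := split_top f N hf
    have h4 := coeff_T_mul_single μ δ hδ N (f.coeff N) (-d)
    rw [if_neg (by omega), if_pos (by omega)] at h4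
    have h5 := ih (N - 1) g h2
    have e1 : N + 1 - ((d + 1 : ℕ) : ℤ) = -d + N := by push_cast; ring
    have e2 : N - 1 + 1 - (d : ℤ) = -d + N := by ring
    have e3 : N - ((d + 1 : ℕ) : ℤ) = N - 1 - d := by push_cast; ring
    have e4 : (1 - ((d + 1 : ℕ) : ℤ)) = -d := by push_cast; ring
    rw [e2] at h5
    rw [e1, e3, e4]
    conv_lhs => rw [h1]
    rw [μ.left_distrib, coeff_add, h4, h5, h3 _ (by omega)]
    have hI : Finset.Icc (-(d : ℤ)) 0 = insert (-(d : ℤ)) (Finset.Icc (1 - (d : ℤ)) 0) := by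
      ext x; simp only [Finset.mem_insert, Finset.mem_Icc]; omega
    rw [hI, Finset.sum_insert (by simp)]
    have e5 : N - (((d + 1 : ℕ) : ℤ) - 1 + -d) = N := by push_cast; ring
    rw [e5]
    have hsum : ∑ j ∈ Finset.Icc (1 - (d : ℤ)) 0, δ j (g.coeff (N - 1 - (d - 1 + j))) =
        ∑ j ∈ Finset.Icc (1 - (d : ℤ)) 0, δ j (f.coeff (N - (((d + 1 : ℕ) : ℤ) - 1 + j))) := by
      apply Finset.sum_congr rfl
      intro j hj
      rw [Finset.mem_Icc] at hj
      rw [h3 _ (by omega)]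
      congr 2
      push_cast; ring
    rw [hsum]
    ring

/-- Coefficients of `T^n · a`, indexed from the top. -/
noncomputable def cc (μ : DeformedProduct L) (n : ℤ) (a : L) (d : ℤ) : L :=
  (μ.mul (T L n) (single 0 a)).coeff (n - d)

theorem coeff_Tn_zero (μ : DeformedProduct L) (n : ℤ) (a : L) (i : ℤ) (hi : n < i) :
    (μ.mul (T L n) (single 0 a)).coeff i = 0 :=
  coeff_mul_zero (N := 0) μ (coeff_T_zero n)
    (fun i hi => by rw [coeff_single, if_neg (by omega)]) i (by omega)

theorem cc_neg (μ : DeformedProduct L) (n : ℤ) (a : L) {d : ℤ} (hd : d < 0) :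
    cc μ n a d = 0 := coeff_Tn_zero μ n a _ (by omega)

theorem cc_succ (μ : DeformedProduct L) (δ : ℤ → L → L) (hδ : HasDelta μ δ)
    (n : ℤ) (a : L) (d : ℤ) :
    cc μ (n + 1) a d = cc μ n a d + ∑ j ∈ Finset.Icc (1 - d) 0, δ j (cc μ n a (d - 1 + j)) := by
  rcases lt_or_ge d 0 with hd | hd
  · rw [cc_neg μ _ a hd, cc_neg μ _ a hd, Finset.Icc_eq_empty (by omega)]
    simp
  · obtain ⟨k, rfl⟩ := Int.eq_ofNat_of_zero_le hd
    have h := coeff_T_mul μ δ hδ k n (μ.mul (T L n) (single 0 a)) (coeff_Tn_zero μ n a)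
    rw [← μ.mul_assoc, μ.T_mul_T, add_comm 1 n] at h
    exact h

theorem cc_zero (μ : DeformedProduct L) (δ : ℤ → L → L) (a : L) (d : ℤ) :
    cc μ 0 a d = S δ (zbinom 0) a d := by
  have hT : T L 0 = single 0 1 := rfl
  rw [cc, hT, μ.lsmul_eq]
  have hz : ∀ k, zbinom 0 (k + 1) = 0 := fun k => by simp [zbinom]
  have hS : ∀ js ∈ C d, js ≠ [] → zbinom 0 js.length • dcomp δ js a = 0 := by
    intro js _ h
    cases js with
    | nil => exact absurd rfl h
    | cons j l => rw [List.length_cons, hz, zero_smul]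
  by_cases hd : d = 0
  · subst hd
    have : S δ (zbinom 0) a 0 = ∑ᶠ js ∈ ({[]} : Set (List ℤ)), zbinom 0 js.length • dcomp δ js a := by
      apply finsum_mem_inter_support_eq'
      intro js hjs
      constructor
      · intro h
        by_contra hc
        exact hjs (hS js h hc)
      · rintro rfl
        simp [C]
    rw [this, finsum_mem_singleton]
    simp [lsmul, coeff_single, zbinom_zero_right, dcomp]
  · have : S δ (zbinom 0) a d = 0 := by
      apply finsum_mem_eq_zero_of_forall_eq_zero
      intro js hjs
      apply hS js hjs
      rintro rfl
      apply hd
      simpa [C] using hjs.2.symm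
    rw [this]
    simp [lsmul, coeff_single, hd]

theorem cc_down (μ : DeformedProduct L) (δ : ℤ → L → L) (hδ : HasDelta μ δ) (n : ℤ) (a : L)
    (h : ∀ d, cc μ (n + 1) a d = S δ (zbinom (n + 1)) a d) (N : ℕ) :
    ∀ d : ℤ, d < N → cc μ n a d = S δ (zbinom n) a d := by
  induction N with
  | zero =>
    intro d hd
    rw [cc_neg μ n a (by simpa using hd), S_neg δ _ a (by simpa using hd)]
  | succ N ih =>
    intro d hd
    have h1 := h d
    rw [cc_succ μ δ hδ, S_zbinom_succ δ (delta_add μ δ hδ)] at h1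
    have h2 : ∑ j ∈ Finset.Icc (1 - d) 0, δ j (cc μ n a (d - 1 + j)) =
        ∑ j ∈ Finset.Icc (1 - d) 0, δ j (S δ (zbinom n) a (d - 1 + j)) := by
      apply Finset.sum_congr rfl
      intro j hj
      rw [Finset.mem_Icc] at hj
      rw [ih _ (by push_cast at hd; omega)]
    rw [h2] at h1
    exact add_right_cancel h1

theorem cc_eq (μ : DeformedProduct L) (δ : ℤ → L → L) (hδ : HasDelta μ δ) (n : ℤ) (a : L) :
    ∀ d, cc μ n a d = S δ (zbinom n) a d := by
  induction n using Int.induction_on with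
  | zero => exact cc_zero μ δ a
  | succ n ih =>
    intro d
    rw [cc_succ μ δ hδ, S_zbinom_succ δ (delta_add μ δ hδ), ih d]
    simp only [ih]
  | pred n ih =>
    intro d
    refine cc_down μ δ hδ _ a ?_ (d + 1).toNat d (by omega)
    rw [sub_add_cancel]
    exact ih

end DefLaurentAux

open InvLaurent in
/-- if `T·a = aT + Σ_{i≤0} δ_i(a)T^i` in a deformed Laurent series ring, then for
every `n ∈ ℤ`, `a ∈ L` and `m ∈ ℤ`, the coefficient of `T^m` in `T^n · a` equals the (finitely
supported) sum of `binom(n,k)·δ_{j₁}⋯δ_{j_k}(a)` over all `k ≥ 0` and all `k`-tuples of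
nonpositive integers `(j₁,…,j_k)` with `j₁+⋯+j_k − k + n = m`. -/
theorem deformedProduct_Tpow_mul_scalar (L : Type*) [Field L] (μ : DeformedProduct L)
    (δ : ℤ → L → L) (hδ : HasDelta μ δ) (n : ℤ) (a : L) (m : ℤ) :
    (μ.mul (T L n) (single 0 a)).coeff m =
      ∑ᶠ js : List ℤ,
        if (∀ j ∈ js, j ≤ 0) ∧ js.sum - (js.length : ℤ) + n = m
        then zbinom n js.length • dcomp δ js a else 0 := by
  have h := DefLaurentAux.cc_eq μ δ hδ n a (n - m)
  rw [DefLaurentAux.cc, sub_sub_cancel] at h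
  rw [h, DefLaurentAux.S]
  apply finsum_congr
  intro js
  have hiff : js ∈ DefLaurentAux.C (n - m) ↔
      ((∀ j ∈ js, j ≤ 0) ∧ js.sum - (js.length : ℤ) + n = m) := by
    simp only [DefLaurentAux.C, Set.mem_setOf_eq]
    constructor
    · rintro ⟨h1, h2⟩
      exact ⟨h1, by omega⟩
    · rintro ⟨h1, h2⟩
      exact ⟨h1, by omega⟩
  by_cases hc : js ∈ DefLaurentAux.C (n - m)
  · rw [if_pos (hiff.1 hc)]
    simp [hc]
  · rw [if_neg (fun h => hc (hiff.2 h))]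
    simp [hc]
end

section
/- Let L be a field of characteristic 0, let · be a deformed Laurent series product on A = L((T^{-1})) satisfying T·a = aT + Σ_{i≤0} δ_i(a)T^i for all a ∈ L (with maps δ_i : L → L, i ≤ 0), and assume δ_i ≠ 0 for some i ≤ 0. Then the centralizer of L in A equals L, and the center of A equals ∩_{i≤0} Ker(δ_i), which is a field. -/
namespace DeformedAux

open InvLaurent

variable {L : Type*} [Field L]

/-- `f` has degree at most `n`. -/
def V (n : ℤ) (f : InvLaurent L) : Prop := ∀ i, n < i → f.coeff i = 0

lemma V.mono {n k : ℤ} {f : InvLaurent L} (h : V n f) (hk : n ≤ k) : V k f :=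
  fun i hi => h i (by omega)

lemma V.add {n : ℤ} {f g : InvLaurent L} (hf : V n f) (hg : V n g) : V n (f + g) :=
  fun i hi => by rw [coeff_add, hf i hi, hg i hi, add_zero]

lemma V.sub {n : ℤ} {f g : InvLaurent L} (hf : V n f) (hg : V n g) : V n (f - g) :=
  fun i hi => by rw [coeff_sub, hf i hi, hg i hi, sub_zero]

lemma V.neg {n : ℤ} {f : InvLaurent L} (hf : V n f) : V n (-f) :=
  fun i hi => by rw [coeff_neg, hf i hi, neg_zero]

lemma V_iff (n : ℤ) (f : InvLaurent L) : V n f ↔ deg f ≤ (n : WithBot ℤ) := by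
  constructor
  · intro h
    by_cases hf : f = 0
    · rw [(deg_eq_bot_iff f).2 hf]; exact bot_le
    · rw [deg, if_neg hf]
      have : sSup {i : ℤ | f.coeff i ≠ 0} ≤ n := by
        apply csSup_le (support_nonempty hf)
        intro i hi
        by_contra hc
        exact hi (h i (by omega))
      exact_mod_cast this
  · intro h i hi
    by_contra hc
    have h1 := (le_deg hc).trans h
    have : i ≤ n := by exact_mod_cast h1
    omega

lemma exists_top {f : InvLaurent L} (hf : f ≠ 0) : ∃ n, V n f ∧ f.coeff n ≠ 0 := by
  obtain ⟨N, hN⟩ := f.bdd'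
  obtain ⟨i, hi⟩ := support_nonempty hf
  obtain ⟨m, hm, hmax⟩ := Int.exists_greatest_of_bdd (P := fun i => f.coeff i ≠ 0)
    ⟨N, fun i hi => by by_contra h; exact hi (hN i (by omega))⟩ ⟨i, hi⟩
  exact ⟨m, fun i hi => by by_contra h; have := hmax i h; omega, hm⟩

lemma coeff_single (n : ℤ) (a : L) (i : ℤ) :
    (single n a).coeff i = if i = n then a else 0 := by
  unfold single; simp only

lemma coeff_lsmul (a : L) (f : InvLaurent L) (i : ℤ) :
    (lsmul a f).coeff i = a * f.coeff i := rfl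

lemma coeff_T (n i : ℤ) : (T L n).coeff i = if i = n then 1 else 0 := coeff_single n 1 i

lemma V_single (n : ℤ) (a : L) : V n (single n a) :=
  fun i hi => by rw [coeff_single, if_neg (by omega)]

lemma V_T (n : ℤ) : V n (T L n) := V_single n 1

lemma single_eq (n : ℤ) (a : L) : single n a = lsmul a (T L n) := by
  ext i; rw [coeff_lsmul, coeff_T, coeff_single]; split <;> simp

lemma V_lsmul {n : ℤ} {f : InvLaurent L} (a : L) (hf : V n f) : V n (lsmul a f) :=
  fun i hi => by rw [coeff_lsmul, hf i hi, mul_zero]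

lemma V_tail {n : ℤ} {f : InvLaurent L} (hf : V n f) :
    V (n - 1) (f - single n (f.coeff n)) := by
  intro i hi
  rw [coeff_sub, coeff_single]
  split
  · next h => rw [h, sub_self]
  · rw [hf i (by omega), sub_zero]

variable (μ : DeformedProduct L)

lemma V_mul {n k : ℤ} {f g : InvLaurent L} (hf : V n f) (hg : V k g) :
    V (n + k) (μ.mul f g) := by
  rw [V_iff] at *
  rw [μ.deg_mul]
  push_cast
  exact add_le_add hf hg

/-- Left multiplication as an additive hom. -/
def ml (f : InvLaurent L) : InvLaurent L →+ InvLaurent L :=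
  AddMonoidHom.mk' (μ.mul f) (μ.left_distrib f)

/-- Right multiplication as an additive hom. -/
def mr (g : InvLaurent L) : InvLaurent L →+ InvLaurent L :=
  AddMonoidHom.mk' (fun f => μ.mul f g) (fun f f' => μ.right_distrib f f' g)

lemma mul_sub' (f g h : InvLaurent L) : μ.mul f (g - h) = μ.mul f g - μ.mul f h :=
  (ml μ f).map_sub g h

lemma sub_mul' (f g h : InvLaurent L) : μ.mul (f - g) h = μ.mul f h - μ.mul g h :=
  (mr μ h).map_sub f g

lemma mul_zero' (f : InvLaurent L) : μ.mul f 0 = 0 := (ml μ f).map_zero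

lemma zero_mul' (f : InvLaurent L) : μ.mul 0 f = 0 := (mr μ f).map_zero

lemma lsmul_mul (a : L) (f g : InvLaurent L) :
    μ.mul (lsmul a f) g = lsmul a (μ.mul f g) := by
  rw [← μ.lsmul_eq, ← μ.lsmul_eq, μ.mul_assoc]

lemma one_mul' (f : InvLaurent L) : μ.mul (T L 0) f = f := by
  have := μ.lsmul_eq 1 f
  rw [T, this]
  ext i; rw [coeff_lsmul, one_mul]

lemma mul_one' (f : InvLaurent L) : μ.mul f (T L 0) = f := by
  have h : μ.mul (μ.mul f (T L 0) - f) (T L 0) = 0 := by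
    rw [sub_mul', μ.mul_assoc, one_mul', sub_self]
  have h2 := μ.deg_mul (μ.mul f (T L 0) - f) (T L 0)
  rw [h, (deg_eq_bot_iff _).2 rfl] at h2
  rcases WithBot.add_eq_bot.1 h2.symm with h3 | h3
  · exact sub_eq_zero.1 ((deg_eq_bot_iff _).1 h3)
  · have := congrArg (fun f => f.coeff 0) ((deg_eq_bot_iff _).1 h3)
    simp [coeff_T] at this

lemma coeff_mul_sigma {n k : ℤ} {f g : InvLaurent L} (hf : V n f) (hg : V k g) :
    (μ.mul f g).coeff (n + k) =
      f.coeff n * (μ.mul (T L n) (single 0 (g.coeff k))).coeff n := by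
  set f' := f - single n (f.coeff n) with hf'
  set g' := g - single k (g.coeff k) with hg'
  have e1 : f = single n (f.coeff n) + f' := by rw [hf']; abel
  have e2 : g = single k (g.coeff k) + g' := by rw [hg']; abel
  have v1 : V (n - 1) f' := V_tail hf
  have v2 : V (k - 1) g' := V_tail hg
  have e3 : μ.mul f g = μ.mul (single n (f.coeff n)) (single k (g.coeff k)) +
      μ.mul (single n (f.coeff n)) g' + μ.mul f' g := by
    conv_lhs => rw [e1]
    rw [μ.right_distrib]
    conv_lhs => arg 1; rw [e2]
    rw [μ.left_distrib]
  have z1 : (μ.mul (single n (f.coeff n)) g').coeff (n + k) = 0 :=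
    V_mul μ (V_single n _) v2 _ (by omega)
  have z2 : (μ.mul f' g).coeff (n + k) = 0 := V_mul μ v1 hg _ (by omega)
  rw [e3, coeff_add, coeff_add, z1, z2, add_zero, add_zero, single_eq n, lsmul_mul, coeff_lsmul]
  congr 1
  rw [single_eq k, ← μ.lsmul_eq, ← μ.mul_assoc]
  set h := μ.mul (T L n) (single 0 (g.coeff k)) with hh
  have vh : V n h := by
    have := V_mul μ (V_T (L := L) n) (V_single 0 (g.coeff k))
    rwa [add_zero] at this
  have e4 : h = single n (h.coeff n) + (h - single n (h.coeff n)) := by abel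
  have z3 : (μ.mul (h - single n (h.coeff n)) (T L k)).coeff (n + k) = 0 :=
    V_mul μ (V_tail vh) (V_T k) _ (by omega)
  conv_lhs => rw [e4]
  rw [μ.right_distrib, coeff_add, z3, add_zero, single_eq n, lsmul_mul, μ.T_mul_T,
    coeff_lsmul, coeff_T, if_pos rfl, mul_one]

variable {μ} {δ : ℤ → L → L}

lemma sigma_id (hδ : HasDelta μ δ) (n : ℤ) (b : L) :
    (μ.mul (T L n) (single 0 b)).coeff n = b := by
  have hadd : ∀ n k : ℤ, ∀ b : L, (μ.mul (T L (n + k)) (single 0 b)).coeff (n + k) =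
      (μ.mul (T L n) (single 0 ((μ.mul (T L k) (single 0 b)).coeff k))).coeff n := by
    intro n k b
    rw [← μ.T_mul_T, μ.mul_assoc, coeff_mul_sigma μ (V_T n) (k := k), coeff_T, if_pos rfl, one_mul]
    have := V_mul μ (V_T (L := L) k) (V_single 0 b)
    rwa [add_zero] at this
  have h0 : ∀ b : L, (μ.mul (T L 0) (single 0 b)).coeff 0 = b := by
    intro b; rw [one_mul', coeff_single, if_pos rfl]
  have h1 : ∀ b : L, (μ.mul (T L 1) (single 0 b)).coeff 1 = b := by
    intro b; rw [hδ, if_pos rfl]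
  have hm1 : ∀ b : L, (μ.mul (T L (-1)) (single 0 b)).coeff (-1) = b := by
    intro b
    have := hadd 1 (-1) b
    rw [h1] at this
    rw [← this]
    exact h0 b
  induction n using Int.induction_on generalizing b with
  | zero => exact h0 b
  | succ i ih => rw [hadd, h1, ih]
  | pred i ih => rw [sub_eq_add_neg, hadd, hm1, ih]

lemma coeff_mul_top (hδ : HasDelta μ δ) {n k : ℤ} {f g : InvLaurent L} (hf : V n f) (hg : V k g) :
    (μ.mul f g).coeff (n + k) = f.coeff n * g.coeff k := by
  rw [coeff_mul_sigma μ hf hg, sigma_id hδ]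

variable (μ) in
/-- The commutator with `a`. -/
def D (a : L) (f : InvLaurent L) : InvLaurent L :=
  μ.mul f (single 0 a) - μ.mul (single 0 a) f

lemma D_add (a : L) (f g : InvLaurent L) : D μ a (f + g) = D μ a f + D μ a g := by
  unfold D; rw [μ.right_distrib, μ.left_distrib]; abel

lemma D_mul (a : L) (f g : InvLaurent L) :
    D μ a (μ.mul f g) = μ.mul f (D μ a g) + μ.mul (D μ a f) g := by
  unfold D; rw [mul_sub', sub_mul']; simp only [μ.mul_assoc]; abel

lemma D_lsmul (a c : L) (f : InvLaurent L) : D μ a (lsmul c f) = lsmul c (D μ a f) := by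
  unfold D; rw [lsmul_mul, μ.lsmul_eq, μ.lsmul_eq]
  ext i
  simp only [coeff_sub, coeff_lsmul]
  ring

lemma D_single (a c : L) : D μ a (single 0 c) = 0 := by
  unfold D; rw [μ.lsmul_eq, μ.lsmul_eq]
  ext i
  simp only [coeff_sub, coeff_lsmul, coeff_single, coeff_zero]
  split <;> ring

lemma V_D (a : L) {n : ℤ} {f : InvLaurent L} (hf : V n f) : V n (D μ a f) := by
  have h1 := V_mul μ hf (V_single 0 a)
  have h2 := V_mul μ (V_single 0 a) hf
  rw [add_zero] at h1
  rw [zero_add] at h2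
  exact h1.sub h2

lemma D_T (hδ : HasDelta μ δ) {a : L} {s : ℤ} (h : V (1 - s) (D μ a (T L 1))) (j : ℤ) :
    V (j - s) (D μ a (T L j)) ∧
      (D μ a (T L j)).coeff (j - s) = j * (D μ a (T L 1)).coeff (1 - s) := by
  set d := (D μ a (T L 1)).coeff (1 - s) with hd
  have step : ∀ j k : ℤ, V (j - s) (D μ a (T L j)) → V (k - s) (D μ a (T L k)) →
      V (j + k - s) (D μ a (T L (j + k))) ∧ (D μ a (T L (j + k))).coeff (j + k - s) =
        (D μ a (T L k)).coeff (k - s) + (D μ a (T L j)).coeff (j - s) := by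
    intro j k hj hk
    rw [← μ.T_mul_T, D_mul]
    have e1 : j + k - s = j + (k - s) := by ring
    have e2 : j + k - s = (j - s) + k := by ring
    constructor
    · refine V.add ?_ ?_
      · rw [e1]; exact V_mul μ (V_T j) hk
      · rw [e2]; exact V_mul μ hj (V_T k)
    · rw [coeff_add]
      congr 1
      · rw [e1, coeff_mul_top hδ (V_T j) hk, coeff_T, if_pos rfl, one_mul]
      · rw [e2, coeff_mul_top hδ hj (V_T k), coeff_T, if_pos rfl, mul_one]
  have hT0 : D μ a (T L 0) = 0 := D_single a 1
  have hm : V (-1 - s) (D μ a (T L (-1))) := by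
    have e : D μ a (T L (-1)) = -(μ.mul (T L (-1)) (μ.mul (D μ a (T L 1)) (T L (-1)))) := by
      have h0 : D μ a (μ.mul (T L 1) (T L (-1))) = 0 := by rw [μ.T_mul_T]; exact hT0
      rw [D_mul] at h0
      have h1 := congrArg (μ.mul (T L (-1))) h0
      rw [mul_zero', μ.left_distrib, ← μ.mul_assoc, μ.T_mul_T] at h1
      have h2 : (-1 : ℤ) + 1 = 0 := by norm_num
      rw [h2, one_mul'] at h1
      exact eq_neg_of_add_eq_zero_left h1
    rw [e]
    apply V.neg
    have := V_mul μ (V_T (L := L) (-1)) (V_mul μ h (V_T (L := L) (-1)))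
    exact this.mono (by omega)
  have hmc : (D μ a (T L (-1))).coeff (-1 - s) = -d := by
    have := (step 1 (-1) h hm).2
    have h2 : (1 : ℤ) + -1 = 0 := by norm_num
    rw [h2, hT0, coeff_zero] at this
    exact eq_neg_of_add_eq_zero_left this.symm
  induction j using Int.induction_on with
  | zero => rw [hT0]; exact ⟨fun _ _ => rfl, by simp⟩
  | succ i ih =>
    obtain ⟨h1, h2⟩ := step _ _ ih.1 h
    refine ⟨h1, ?_⟩
    rw [h2, ih.2]; push_cast; ring
  | pred i ih =>
    obtain ⟨h1, h2⟩ := step _ _ ih.1 hm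
    refine ⟨h1, ?_⟩
    rw [sub_eq_add_neg (-(i : ℤ)) 1, h2, ih.2, hmc]; push_cast; ring

lemma D_V_aux (hδ : HasDelta μ δ) {a : L} {s : ℤ} (h : V (1 - s) (D μ a (T L 1))) (d : ℤ)
    (k : ℕ) : ∀ f : InvLaurent L, (k : ℤ) ≤ s → V (d - s + k) f → V (d - s) (D μ a f) := by
  induction k with
  | zero => intro f _ hf; exact V_D a (by simpa using hf)
  | succ k ih =>
    intro f hk hf
    push_cast at hk hf
    have e : f = single (d - s + (k + 1)) (f.coeff (d - s + (k + 1))) +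
      (f - single (d - s + (k + 1)) (f.coeff (d - s + (k + 1)))) := by abel
    rw [e, D_add]
    apply V.add
    · rw [single_eq, D_lsmul]
      exact V_lsmul _ ((D_T hδ h _).1.mono (by omega))
    · exact ih _ (by omega) ((V_tail hf).mono (by omega))

lemma D_V (hδ : HasDelta μ δ) {a : L} {s : ℤ} (hs : 0 ≤ s) (h : V (1 - s) (D μ a (T L 1)))
    {n : ℤ} {f : InvLaurent L} (hf : V n f) : V (n - s) (D μ a f) := by
  lift s to ℕ using hs
  exact D_V_aux hδ h n s f le_rfl (by simpa using hf)

lemma D_top (hδ : HasDelta μ δ) {a : L} {s : ℤ} (hs : 0 ≤ s) (h : V (1 - s) (D μ a (T L 1)))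
    {n : ℤ} {f : InvLaurent L} (hf : V n f) :
    (D μ a f).coeff (n - s) = f.coeff n * (n * (D μ a (T L 1)).coeff (1 - s)) := by
  have e : f = single n (f.coeff n) + (f - single n (f.coeff n)) := by abel
  have z : (D μ a (f - single n (f.coeff n))).coeff (n - s) = 0 :=
    D_V hδ hs h (V_tail hf) _ (by omega)
  conv_lhs => rw [e]
  rw [D_add, coeff_add, z, add_zero, single_eq, D_lsmul, coeff_lsmul, (D_T hδ h n).2]

lemma D_T_one (hδ : HasDelta μ δ) (a : L) (i : ℤ) :
    (D μ a (T L 1)).coeff i = if i ≤ 0 then δ i a else 0 := by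
  unfold D
  rw [coeff_sub, hδ, μ.lsmul_eq, coeff_lsmul, coeff_T]
  by_cases h1 : i = 1
  · subst h1; simp
  · simp [h1]

lemma D_T_one_eq_zero_iff (hδ : HasDelta μ δ) (a : L) :
    D μ a (T L 1) = 0 ↔ ∀ i : ℤ, i ≤ 0 → δ i a = 0 := by
  constructor
  · intro h i hi
    have := D_T_one hδ a i
    rw [h, if_pos hi, coeff_zero] at this
    exact this.symm
  · intro h
    ext i
    rw [D_T_one hδ, coeff_zero]
    split
    · next hi => exact h i hi
    · rfl

lemma central (hδ : HasDelta μ δ) {a : L} (h : D μ a (T L 1) = 0) (f : InvLaurent L) :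
    D μ a f = 0 := by
  obtain ⟨N, hN⟩ := f.bdd'
  ext i
  have hs : (0 : ℤ) ≤ max 0 (N - i + 1) := le_max_left _ _
  refine D_V hδ (n := N) hs ?_ hN i ?_
  · rw [h]; exact fun _ _ => rfl
  · have := le_max_right 0 (N - i + 1)
    omega

lemma centralizer [CharZero L] (hδ : HasDelta μ δ) {a : L} (ha : D μ a (T L 1) ≠ 0)
    {w : InvLaurent L} (hw : D μ a w = 0) : w = single 0 (w.coeff 0) := by
  obtain ⟨m, hm, hm0⟩ := exists_top ha
  have hm1 : m ≤ 0 := by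
    by_contra hc
    rw [D_T_one hδ, if_neg hc] at hm0
    exact hm0 rfl
  by_contra hne
  have hu : w - single 0 (w.coeff 0) ≠ 0 := fun h => hne (sub_eq_zero.1 h)
  set u := w - single 0 (w.coeff 0) with hu'
  obtain ⟨n, hn, hn0⟩ := exists_top hu
  have hDu : D μ a u = 0 := by
    have e : w = u + single 0 (w.coeff 0) := by rw [hu']; abel
    rw [e, D_add, D_single, add_zero] at hw
    exact hw
  have hnz : n ≠ 0 := by
    rintro rfl
    apply hn0
    rw [hu', coeff_sub, coeff_single, if_pos rfl, sub_self]
  have e : 1 - (1 - m) = m := by ring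
  have := D_top hδ (s := 1 - m) (by omega) (by rw [e]; exact hm) hn
  rw [hDu, coeff_zero, e] at this
  have hnL : (n : L) ≠ 0 := by exact_mod_cast hnz
  exact mul_ne_zero hn0 (mul_ne_zero hnL hm0) this.symm

lemma single_mul_single (a b : L) : μ.mul (single 0 a) (single 0 b) = single 0 (a * b) := by
  rw [μ.lsmul_eq]; ext i
  rw [coeff_lsmul, coeff_single, coeff_single]; split <;> simp

lemma single_add (a b : L) : single 0 (a + b) = single 0 a + single 0 b := by
  ext i; simp only [coeff_add, coeff_single]; split <;> simp

variable (μ) in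
/-- Elements of `L` commuting with `T`. -/
def F : Subfield L where
  carrier := {b | μ.mul (T L 1) (single 0 b) = μ.mul (single 0 b) (T L 1)}
  mul_mem' {a b} ha hb := by
    simp only [Set.mem_setOf_eq] at *
    rw [← single_mul_single (μ := μ), ← μ.mul_assoc, ha, μ.mul_assoc, hb, μ.mul_assoc]
  one_mem' := by
    show μ.mul (T L 1) (T L 0) = μ.mul (T L 0) (T L 1)
    rw [one_mul', mul_one']
  add_mem' {a b} ha hb := by
    simp only [Set.mem_setOf_eq] at *
    rw [single_add, μ.left_distrib, μ.right_distrib, ha, hb]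
  zero_mem' := by
    have : single 0 (0 : L) = 0 := by ext i; rw [coeff_single]; simp
    simp only [Set.mem_setOf_eq]
    rw [this, mul_zero', zero_mul']
  neg_mem' {a} ha := by
    simp only [Set.mem_setOf_eq] at *
    have : single 0 (-a) = 0 - single 0 a := by
      ext i; rw [coeff_sub, coeff_single, coeff_single]; split <;> simp
    rw [this, mul_sub', sub_mul', ha, mul_zero', zero_mul']
  inv_mem' a ha := by
    simp only [Set.mem_setOf_eq] at *
    by_cases h0 : a = 0
    · rw [h0, inv_zero, ← h0]; exact ha
    have h1 : μ.mul (single 0 a⁻¹) (single 0 a) = T L 0 := by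
      rw [single_mul_single, inv_mul_cancel₀ h0]; rfl
    have h2 : μ.mul (single 0 a) (single 0 a⁻¹) = T L 0 := by
      rw [single_mul_single, mul_inv_cancel₀ h0]; rfl
    calc μ.mul (T L 1) (single 0 a⁻¹)
        = μ.mul (μ.mul (single 0 a⁻¹) (single 0 a)) (μ.mul (T L 1) (single 0 a⁻¹)) := by
          rw [h1, one_mul']
      _ = μ.mul (single 0 a⁻¹) (μ.mul (μ.mul (single 0 a) (T L 1)) (single 0 a⁻¹)) := by
          simp only [μ.mul_assoc]
      _ = μ.mul (single 0 a⁻¹) (μ.mul (T L 1) (μ.mul (single 0 a) (single 0 a⁻¹))) := by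
          rw [← ha]; simp only [μ.mul_assoc]
      _ = _ := by rw [h2, mul_one']

end DeformedAux

open InvLaurent in
/-- let `L` have characteristic `0`, let `·` be a deformed Laurent series product
on `A = L((T⁻¹))` with `T·a = aT + Σ_{i≤0} δ_i(a)T^i`, and suppose some `δ_i ≠ 0` (`i ≤ 0`).
Then the centralizer of `L` in `A` is `L`, and the center of `A` is `∩_{i≤0} Ker δ_i`,
which is a field (a subfield of `L`). -/
theorem deformedProduct_centralizer_and_center (L : Type*) [Field L] [CharZero L]
    (μ : DeformedProduct L) (δ : ℤ → L → L) (hδ : HasDelta μ δ)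
    (hne : ∃ i : ℤ, i ≤ 0 ∧ ∃ a : L, δ i a ≠ 0) :
    {w : InvLaurent L | ∀ b : L, μ.mul (single 0 b) w = μ.mul w (single 0 b)} =
      Set.range (fun b : L => single 0 b) ∧
    {w : InvLaurent L | ∀ z : InvLaurent L, μ.mul z w = μ.mul w z} =
      (fun b : L => single 0 b) '' {b : L | ∀ i : ℤ, i ≤ 0 → δ i b = 0} ∧
    ∃ F : Subfield L, (F : Set L) = {b : L | ∀ i : ℤ, i ≤ 0 → δ i b = 0} := by
  have hc : ∀ w : InvLaurent L, (∀ b : L, μ.mul (single 0 b) w = μ.mul w (single 0 b)) →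
      w = single 0 (w.coeff 0) := by
    obtain ⟨i, hi, a, ha⟩ := hne
    intro w hw
    refine DeformedAux.centralizer hδ (a := a) ?_ (sub_eq_zero.2 (hw a).symm)
    intro h
    exact ha ((DeformedAux.D_T_one_eq_zero_iff hδ a).1 h i hi)
  refine ⟨?_, ?_, DeformedAux.F μ, ?_⟩
  · ext w
    constructor
    · intro hw
      exact ⟨w.coeff 0, (hc w hw).symm⟩
    · rintro ⟨c, rfl⟩ b
      exact (sub_eq_zero.1 (DeformedAux.D_single c b)) ▸ (by
        simp only [DeformedAux.single_mul_single, mul_comm])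
  · ext w
    constructor
    · intro hw
      have e := hc w fun b => hw _
      refine ⟨w.coeff 0, ?_, e.symm⟩
      apply (DeformedAux.D_T_one_eq_zero_iff hδ _).1
      have := hw (T L 1)
      rw [e] at this
      exact sub_eq_zero.2 this
    · rintro ⟨b, hb, rfl⟩ z
      exact sub_eq_zero.1
        (DeformedAux.central hδ ((DeformedAux.D_T_one_eq_zero_iff hδ b).2 hb) z)
  · ext b
    refine Iff.trans ?_ (DeformedAux.D_T_one_eq_zero_iff hδ b)
    exact sub_eq_zero.symm
end

section
/- Let L be a field of characteristic 0 and let · be a deformed Laurent series product on L((T^{-1})) satisfying T·a = aT + Σ_{i≤0} δ_i(a)T^i for all a ∈ L, where δ_i : L → L (i ≤ 0) are maps. Then the maps δ_i satisfy the Leibniz-type identity (★): for all i ≤ 0 and all a,b ∈ L, δ_i(ab) = a δ_i(b) + δ_i(a) b + Σ_{k≥1} Σ binom(l,k) δ_l(a) δ_{j_1}⋯δ_{j_k}(b), the inner sum being over all tuples (l, j_1, …, j_k) of nonpositive integers with j_1+⋯+j_k − k + l = i (a finite index set). -/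
namespace LStar
open InvLaurent
variable {L : Type*} [Field L]

/-- coefficients vanish above `n` -/
def Low (n : ℤ) (f : InvLaurent L) : Prop := ∀ j, n < j → f.coeff j = 0

lemma low_iff (n : ℤ) (f : InvLaurent L) : Low n f ↔ deg f ≤ (n : WithBot ℤ) := by
  constructor
  · intro h
    by_cases h0 : f = 0
    · rw [(deg_eq_bot_iff f).2 h0]; exact bot_le
    · rw [deg, if_neg h0]
      have : sSup {i : ℤ | f.coeff i ≠ 0} ≤ n := by
        apply csSup_le (support_nonempty h0)
        intro j hj
        by_contra hlt
        exact hj (h j (by omega))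
      exact_mod_cast this
  · intro h j hj
    by_contra hne
    have h1 := (le_deg hne).trans h
    have : j ≤ n := by exact_mod_cast h1
    omega

lemma Low.mul (μ : DeformedProduct L) {m n : ℤ} {f g : InvLaurent L} (hf : Low m f)
    (hg : Low n g) : Low (m + n) (μ.mul f g) := by
  rw [low_iff] at *
  rw [μ.deg_mul, WithBot.coe_add]
  exact add_le_add hf hg

lemma Low.mono {m n : ℤ} {f : InvLaurent L} (hf : Low m f) (h : m ≤ n) : Low n f :=
  fun j hj => hf j (by omega)

lemma low_single (n : ℤ) (a : L) : Low n (single n a) := fun j hj => if_neg (by omega)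

lemma coeff_single (n : ℤ) (a : L) (i : ℤ) :
    (single n a).coeff i = if i = n then a else 0 := rfl

lemma coeff_lsmul (a : L) (f : InvLaurent L) (i : ℤ) :
    (lsmul a f).coeff i = a * f.coeff i := rfl

/-- coefficient as additive hom -/
def coeffHom (i : ℤ) : InvLaurent L →+ L where
  toFun f := f.coeff i
  map_zero' := rfl
  map_add' _ _ := rfl

lemma coeff_sum {ι : Type*} (s : Finset ι) (F : ι → InvLaurent L) (i : ℤ) :
    (∑ x ∈ s, F x).coeff i = ∑ x ∈ s, (F x).coeff i :=
  map_sum (coeffHom i) F s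

lemma coeff_zsmul (n : ℤ) (f : InvLaurent L) (i : ℤ) :
    (n • f).coeff i = n • f.coeff i :=
  map_zsmul (coeffHom i) n f

/-- left multiplication -/
def lm (μ : DeformedProduct L) (f : InvLaurent L) : InvLaurent L →+ InvLaurent L :=
  AddMonoidHom.mk' (μ.mul f) (μ.left_distrib f)

/-- right multiplication -/
def rm (μ : DeformedProduct L) (g : InvLaurent L) : InvLaurent L →+ InvLaurent L :=
  AddMonoidHom.mk' (fun f => μ.mul f g) (fun a b => μ.right_distrib a b g)

lemma single_eq (μ : DeformedProduct L) (n : ℤ) (a : L) :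
    single n a = μ.mul (single 0 a) (T L n) := by
  rw [μ.lsmul_eq]
  ext i
  simp [coeff_lsmul, T, coeff_single]

lemma T_zero_mul (μ : DeformedProduct L) (f : InvLaurent L) : μ.mul (T L 0) f = f := by
  rw [T, μ.lsmul_eq]; ext i; simp [coeff_lsmul]

/-- truncation -/
lemma exists_tail (f : InvLaurent L) {M : ℤ} (hf : Low M f) (N : ℤ) :
    ∃ t : InvLaurent L, Low (N - 1) t ∧
      f = ∑ l ∈ Finset.Icc N M, single l (f.coeff l) + t := by
  refine ⟨f - ∑ l ∈ Finset.Icc N M, single l (f.coeff l), ?_, by abel⟩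
  intro j hj
  rw [coeff_sub, coeff_sum]
  simp only [coeff_single]
  rw [Finset.sum_ite_eq]
  split_ifs with h
  · simp
  · rw [Finset.mem_Icc] at h
    rw [hf j (by omega)]; simp

lemma coeff_mul_left (μ : DeformedProduct L) (f g : InvLaurent L) {M d N i : ℤ}
    (hf : Low M f) (hg : Low d g) (hN : N + d ≤ i) :
    (μ.mul f g).coeff i =
      ∑ l ∈ Finset.Icc N M, f.coeff l * (μ.mul (T L l) g).coeff i := by
  obtain ⟨t, ht, hft⟩ := exists_tail f hf N
  have h1 : μ.mul f g = ∑ l ∈ Finset.Icc N M, μ.mul (single l (f.coeff l)) g + μ.mul t g := by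
    conv_lhs => rw [hft]
    rw [μ.right_distrib]
    congr 1
    exact map_sum (rm μ g) _ _
  rw [h1, coeff_add, coeff_sum, (ht.mul μ hg) i (by omega), add_zero]
  refine Finset.sum_congr rfl fun l _ => ?_
  rw [single_eq μ, μ.mul_assoc, μ.lsmul_eq, coeff_lsmul]

lemma coeff_mul_T (μ : DeformedProduct L) (f : InvLaurent L) (n i : ℤ) :
    (μ.mul f (T L n)).coeff i = f.coeff (i - n) := by
  obtain ⟨M, hM⟩ := f.bdd'
  rw [coeff_mul_left μ f (T L n) (M := M) (d := n) (N := i - n) hM (low_single n 1) (by omega)]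
  simp only [μ.T_mul_T]
  have : ∀ l, f.coeff l * (T L (l + n)).coeff i = if i - n = l then f.coeff l else 0 := by
    intro l
    simp only [T, coeff_single, mul_ite, mul_one, mul_zero]
    exact if_congr (by omega) rfl rfl
  simp only [this, Finset.sum_ite_eq]
  split_ifs with h
  · rfl
  · rw [Finset.mem_Icc] at h
    exact (hM _ (by omega)).symm

lemma coeff_mul_right (μ : DeformedProduct L) (f g : InvLaurent L) {M d N i : ℤ}
    (hf : Low d f) (hg : Low M g) (hN : N + d ≤ i) :
    (μ.mul f g).coeff i =
      ∑ l ∈ Finset.Icc N M, (μ.mul f (single 0 (g.coeff l))).coeff (i - l) := by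
  obtain ⟨t, ht, hft⟩ := exists_tail g hg N
  have h1 : μ.mul f g = ∑ l ∈ Finset.Icc N M, μ.mul f (single l (g.coeff l)) + μ.mul f t := by
    conv_lhs => rw [hft]
    rw [μ.left_distrib]
    congr 1
    exact map_sum (lm μ f) _ _
  rw [h1, coeff_add, coeff_sum, (hf.mul μ ht) i (by omega), add_zero]
  refine Finset.sum_congr rfl fun l _ => ?_
  rw [single_eq μ l, ← μ.mul_assoc, coeff_mul_T]

/-- conjugation by `T` -/
def conj (μ : DeformedProduct L) : InvLaurent L →+ InvLaurent L :=
  (lm μ (T L 1)).comp (rm μ (T L (-1)))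

lemma conj_apply (μ : DeformedProduct L) (f : InvLaurent L) :
    conj μ f = μ.mul (T L 1) (μ.mul f (T L (-1))) := rfl

lemma coeff_conj (μ : DeformedProduct L) (f : InvLaurent L) (m : ℤ) :
    (conj μ f).coeff m = (μ.mul (T L 1) f).coeff (m + 1) := by
  rw [conj_apply, ← μ.mul_assoc, coeff_mul_T]; congr 1

/-- `E = conj - 1` -/
def E (μ : DeformedProduct L) : InvLaurent L →+ InvLaurent L :=
  conj μ - AddMonoidHom.id _

lemma conj_eq (μ : DeformedProduct L) (f : InvLaurent L) : conj μ f = f + E μ f := by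
  simp [E]

lemma low_of_conj (μ : DeformedProduct L) {n : ℤ} {f : InvLaurent L}
    (h : Low n (conj μ f)) : Low n f := by
  have h1 : μ.mul (T L (-1)) (conj μ f) = μ.mul f (T L (-1)) := by
    rw [conj_apply, ← μ.mul_assoc, μ.T_mul_T]; exact T_zero_mul μ _
  have h2 := (low_single (-1) (1 : L)).mul μ h
  change Low _ (μ.mul (T L (-1)) (conj μ f)) at h2
  rw [h1] at h2
  intro j hj
  have := h2 (j - 1) (by omega)
  rwa [coeff_mul_T, show j - 1 - -1 = j by omega] at this

variable {μ : DeformedProduct L} {δ : ℤ → L → L}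

lemma coeff_T_mul (hδ : HasDelta μ δ) {M N m : ℤ} (f : InvLaurent L) (hf : Low M f)
    (hN : N ≤ m) :
    (μ.mul (T L 1) f).coeff (m + 1) = f.coeff m +
      ∑ l ∈ Finset.Icc N M, if m + 1 ≤ l then δ (m + 1 - l) (f.coeff l) else 0 := by
  rw [coeff_mul_right μ (T L 1) f (M := M) (d := 1) (N := N) (low_single 1 1) hf (by omega)]
  have : ∀ l, (μ.mul (T L 1) (single 0 (f.coeff l))).coeff (m + 1 - l) =
      (if m = l then f.coeff l else 0) +
        if m + 1 ≤ l then δ (m + 1 - l) (f.coeff l) else 0 := by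
    intro l
    rw [hδ]
    by_cases h : m = l
    · subst h; simp
    · rw [if_neg (by omega), if_neg h, zero_add]
      exact if_congr (by omega) rfl rfl
  simp only [this, Finset.sum_add_distrib, Finset.sum_ite_eq]
  congr 1
  split_ifs with h
  · rfl
  · rw [Finset.mem_Icc] at h; exact (hf _ (by omega)).symm

/-- coefficient formula for `E` -/
lemma coeff_E (hδ : HasDelta μ δ) {M m : ℤ} (f : InvLaurent L) (hf : Low 0 f)
    (hm : -M ≤ m) :
    (E μ f).coeff m = ∑ j ∈ Finset.Icc (-M) 0, 
      if m - j + 1 ≤ 0 then δ j (f.coeff (m - j + 1)) else 0 := by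
  have h0 : (E μ f).coeff m = (conj μ f).coeff m - f.coeff m := by
    rw [conj_eq, coeff_add]; ring
  rw [h0, coeff_conj, coeff_T_mul hδ f hf hm, add_sub_cancel_left,
    ← Finset.sum_filter, ← Finset.sum_filter]
  refine Finset.sum_bij' (fun l _ => m + 1 - l) (fun j _ => m + 1 - j) ?_ ?_ ?_ ?_ ?_
  · intro l hl; simp only [Finset.mem_filter, Finset.mem_Icc] at *; omega
  · intro l hl; simp only [Finset.mem_filter, Finset.mem_Icc] at *; omega
  · intros; omega
  · intros; omega
  · intro l hl
    have e : m - (m + 1 - l) + 1 = l := by omega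
    rw [e]

lemma low_E (hδ : HasDelta μ δ) {n : ℤ} (f : InvLaurent L) (hf : Low n f) :
    Low (n - 1) (E μ f) := by
  intro m hm
  have h0 : (E μ f).coeff m = (conj μ f).coeff m - f.coeff m := by
    rw [conj_eq, coeff_add]; ring
  rw [h0, coeff_conj, coeff_T_mul hδ f hf le_rfl, add_sub_cancel_left]
  apply Finset.sum_eq_zero
  intro l hl
  rw [Finset.mem_Icc] at hl
  rw [if_neg (by omega)]

lemma low_E_iter (hδ : HasDelta μ δ) (b : L) (k : ℕ) :
    Low (-(k : ℤ)) ((E μ)^[k] (single 0 b)) := by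
  induction k with
  | zero => exact low_single 0 b
  | succ k ih =>
    rw [Function.iterate_succ_apply']
    exact (low_E hδ _ ih).mono (by push_cast; omega)

lemma delta_add (hδ : HasDelta μ δ) {j : ℤ} (hj : j ≤ 0) (a b : L) :
    δ j (a + b) = δ j a + δ j b := by
  have h : ∀ a, δ j a = (μ.mul (T L 1) (single 0 a)).coeff j := by
    intro a; rw [hδ, if_neg (by omega), if_pos hj]
  rw [h, h, h, ← coeff_add, ← μ.left_distrib]
  congr 2
  ext i
  simp only [coeff_single, coeff_add]; split_ifs <;> simp

/-- `δ j` as an additive hom -/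
def dHom (hδ : HasDelta μ δ) (j : ℤ) (hj : j ≤ 0) : L →+ L :=
  AddMonoidHom.mk' (δ j) (delta_add hδ hj)

/-- consing as an embedding -/
def consEmb : ℤ × List ℤ ↪ List ℤ where
  toFun p := p.1 :: p.2
  inj' := by
    rintro ⟨a, s⟩ ⟨b, t⟩ h
    simp only [List.cons.injEq] at h
    exact Prod.ext h.1 h.2

lemma consEmb_apply (a : ℤ) (s : List ℤ) : consEmb (a, s) = a :: s := rfl

/-- lists of length `k` with entries in `[-M,0]` -/
noncomputable def A (M : ℤ) : ℕ → Finset (List ℤ)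
  | 0 => {[]}
  | k + 1 => (Finset.Icc (-M) 0 ×ˢ A M k).map consEmb

lemma mem_A (M : ℤ) (k : ℕ) (s : List ℤ) :
    s ∈ A M k ↔ s.length = k ∧ ∀ j ∈ s, -M ≤ j ∧ j ≤ 0 := by
  induction k generalizing s with
  | zero =>
    simp only [A, Finset.mem_singleton, List.length_eq_zero_iff]
    constructor
    · rintro rfl; simp
    · exact fun h => h.1
  | succ k ih =>
    simp only [A, Finset.mem_map, Finset.mem_product, Finset.mem_Icc, consEmb_apply,
      Prod.exists]
    constructor
    · rintro ⟨j, t, ⟨hj, ht⟩, rfl⟩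
      rw [ih] at ht
      refine ⟨by simp [ht.1], ?_⟩
      intro x hx
      rcases List.mem_cons.1 hx with rfl | hx
      · exact hj
      · exact ht.2 x hx
    · rintro ⟨hl, hs⟩
      cases s with
      | nil => simp at hl
      | cons j t =>
        refine ⟨j, t, ⟨hs j (by simp), (ih t).2 ⟨by simpa using hl, fun x hx => hs x (by simp [hx])⟩⟩, rfl⟩

lemma coeff_E_iter (hδ : HasDelta μ δ) (b : L) (M : ℤ) (k : ℕ) (m : ℤ) (hm : -M ≤ m) :
    ((E μ)^[k] (single 0 b)).coeff m =
      ∑ s ∈ A M k, if s.sum - (k : ℤ) = m then dcomp δ s b else 0 := by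
  induction k generalizing m with
  | zero =>
    simp only [Function.iterate_zero, id, A, Finset.sum_singleton, coeff_single]
    simp only [List.sum_nil, dcomp]
    exact if_congr (by push_cast; omega) rfl rfl
  | succ k ih =>
    have hlow := low_E_iter hδ b k
    rw [Function.iterate_succ_apply', coeff_E hδ _ (hlow.mono (by omega)) hm, A,
      Finset.sum_map, Finset.sum_product]
    refine Finset.sum_congr rfl fun j hj => ?_
    rw [Finset.mem_Icc] at hj
    have e : (if m - j + 1 ≤ 0 then δ j (((E μ)^[k] (single 0 b)).coeff (m - j + 1)) else 0)
        = δ j (((E μ)^[k] (single 0 b)).coeff (m - j + 1)) := by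
      split_ifs with h
      · rfl
      · rw [hlow _ (by omega)]; exact (map_zero (dHom hδ j hj.2)).symm
    rw [e, ih _ (by omega)]
    refine (map_sum (dHom hδ j hj.2) _ _).trans ?_
    refine Finset.sum_congr rfl fun s _ => ?_
    simp only [consEmb_apply, List.sum_cons, dcomp]
    by_cases h : s.sum - (k : ℤ) = m - j + 1
    · rw [if_pos h, if_pos (by push_cast; omega)]; rfl
    · rw [if_neg h, if_neg (by push_cast; omega)]; exact map_zero _

lemma zbinom_eq (n : ℤ) (k : ℕ) : zbinom n k = Ring.choose n k := by
  unfold zbinom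
  split_ifs with h
  · obtain ⟨m, rfl⟩ := Int.eq_ofNat_of_zero_le h
    simp [Ring.choose_natCast]
  · have := Ring.choose_neg (-n) k
    rw [neg_neg] at this
    rw [this]
    have h2 : -n + (k : ℤ) - 1 = (((k : ℤ) - 1 - n).toNat : ℤ) := by omega
    rw [h2, Ring.choose_natCast]
    simp [Int.negOnePow, Units.smul_def]

lemma zbinom_succ (n : ℤ) (k : ℕ) :
    zbinom (n + 1) (k + 1) = zbinom n k + zbinom n (k + 1) := by
  simp only [zbinom_eq]; exact Ring.choose_succ_succ n k

lemma zbinom_zero_right (n : ℤ) : zbinom n 0 = 1 := by simp [zbinom_eq]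

/-- truncated binomial series -/
def S (μ : DeformedProduct L) (b : L) (K : ℕ) (l : ℤ) : InvLaurent L :=
  ∑ k ∈ Finset.range (K + 1), zbinom l k • (E μ)^[k] (single 0 b)

lemma conj_S (b : L) (K : ℕ) (l : ℤ) :
    conj μ (S μ b K l) = S μ b K (l + 1) + zbinom l K • (E μ)^[K + 1] (single 0 b) := by
  rw [conj_eq]
  induction K with
  | zero => simp [S, zbinom_zero_right]
  | succ K ih =>
    have h : ∀ l, S μ b (K + 1) l = S μ b K l + zbinom l (K + 1) • (E μ)^[K + 1] (single 0 b) := by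
      intro l; exact Finset.sum_range_succ _ _
    rw [h, h, map_add, map_zsmul, ← Function.iterate_succ_apply' (E μ), zbinom_succ, add_smul]
    rw [show ∀ x y z w : InvLaurent L, x + y + (z + w) = (x + z) + y + w by intros; abel, ih]
    abel

lemma low_conj_series (hδ : HasDelta μ δ) (b : L) (K : ℕ) (n : ℕ) :
    Low (-(K : ℤ) - 1) (μ.mul (μ.mul (T L (-n)) (single 0 b)) (T L n) - S μ b K (-n)) := by
  induction n with
  | zero =>
    have : S μ b K (-(0 : ℕ)) = single 0 b := by
      rw [S, Finset.sum_range_succ']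
      rw [Finset.sum_eq_zero]
      · simp [zbinom_zero_right]
      · intro k _; simp [zbinom_eq]
    rw [this]
    intro j hj
    rw [coeff_sub, coeff_mul_T]
    simp [T_zero_mul]
  | succ n ih =>
    apply low_of_conj μ
    rw [map_sub, conj_S]
    have h1 : conj μ (μ.mul (μ.mul (T L (-((n + 1 : ℕ) : ℤ))) (single 0 b)) (T L ((n + 1 : ℕ) : ℤ)))
        = μ.mul (μ.mul (T L (-n)) (single 0 b)) (T L n) := by
      rw [conj_apply, μ.mul_assoc _ _ (T L (-1)), μ.T_mul_T, ← μ.mul_assoc, ← μ.mul_assoc,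
        μ.T_mul_T]
      congr 3 <;> push_cast <;> congr 1 <;> ring
    rw [h1, show (-((n + 1 : ℕ) : ℤ)) + 1 = -n by push_cast; ring]
    intro j hj
    rw [← sub_sub, coeff_sub, ih j hj, coeff_zsmul,
      low_E_iter hδ b (K + 1) j (by push_cast; omega)]
    simp

/-- the coefficient formula for `T^l · b` -/
lemma coeff_T_mul_single (hδ : HasDelta μ δ) (b : L) (M : ℕ) {l i : ℤ} (hl : l ≤ 0)
    (hi : -(M : ℤ) ≤ i - l) :
    (μ.mul (T L l) (single 0 b)).coeff i =
      ∑ k ∈ Finset.range (M + 1), ∑ s ∈ A M k,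
        if s.sum - (k : ℤ) + l = i then zbinom l k • dcomp δ s b else 0 := by
  obtain ⟨n, rfl⟩ : ∃ n : ℕ, l = -n := ⟨(-l).toNat, by omega⟩
  have h := low_conj_series hδ b M n (i - -n) (by omega)
  rw [coeff_sub, sub_eq_zero, coeff_mul_T, S, coeff_sum] at h
  rw [show i - -(n : ℤ) - n = i by ring] at h
  rw [h]
  refine Finset.sum_congr rfl fun k _ => ?_
  rw [coeff_zsmul, coeff_E_iter hδ b M k _ hi, Finset.smul_sum]
  refine Finset.sum_congr rfl fun s _ => ?_
  rw [smul_ite, smul_zero]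
  exact if_congr (by omega) rfl rfl

lemma list_sum_le {s : List ℤ} (hs : ∀ j ∈ s, j ≤ 0) : s.sum ≤ 0 ∧ ∀ j ∈ s, s.sum ≤ j := by
  induction s with
  | nil => simp
  | cons a t ih =>
    have h1 := ih fun j hj => hs j (by simp [hj])
    have h2 := hs a (by simp)
    simp only [List.sum_cons, List.mem_cons]
    refine ⟨by omega, ?_⟩
    rintro j (rfl | hj)
    · omega
    · have := h1.2 j hj; omega

end LStar

open InvLaurent in
/-- if `L` has characteristic `0` and a deformed Laurent series product on
`L((T⁻¹))` satisfies `T·a = aT + Σ_{i≤0} δ_i(a)T^i`, then the maps `δ_i` satisfy the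
Leibniz-type identity (★). -/
theorem deformedProduct_leibnizStar (L : Type*) [Field L] [CharZero L]
    (μ : DeformedProduct L) (δ : ℤ → L → L) (hδ : HasDelta μ δ) :
    LeibnizStar δ := by
  classical
  intro i hi a b
  obtain ⟨M, rfl⟩ : ∃ n : ℕ, i = -n := ⟨(-i).toNat, by omega⟩
  have hd : ∀ c, δ (-M) c = (μ.mul (T L 1) (single 0 c)).coeff (-M) := by
    intro c; rw [hδ, if_neg (by omega), if_pos hi]
  have hab : single 0 (a * b) = μ.mul (single 0 a) (single 0 b) := by
    rw [μ.lsmul_eq]; ext j; simp [LStar.coeff_lsmul, LStar.coeff_single]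
  have hlow : LStar.Low 1 (μ.mul (T L 1) (single 0 a)) :=
    (LStar.low_single 1 (1 : L)).mul μ (LStar.low_single 0 a)
  have hIcc : Finset.Icc (-(M : ℤ)) 1 = insert 1 (Finset.Icc (-(M : ℤ)) 0) := by
    ext x; simp only [Finset.mem_Icc, Finset.mem_insert]; omega
  have key : δ (-M) (a * b) = a * δ (-M) b +
      ∑ l ∈ Finset.Icc (-(M : ℤ)) 0, δ l a * (μ.mul (T L l) (single 0 b)).coeff (-M) := by
    rw [hd, hab, ← μ.mul_assoc, LStar.coeff_mul_left μ _ _ (N := -M) hlow (LStar.low_single 0 b)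
      (by omega), hIcc, Finset.sum_insert (by simp), ← hd b, hδ, if_pos rfl]
    congr 1
    refine Finset.sum_congr rfl fun l hl => ?_
    rw [Finset.mem_Icc] at hl
    rw [hδ, if_neg (by omega), if_pos hl.2]
  rw [key, add_assoc]
  congr 1
  set F : ℤ → List ℤ → L := fun l s =>
    if s.sum - (s.length : ℤ) + l = -(M : ℤ) then zbinom l s.length • (δ l a * dcomp δ s b) else 0
    with hF
  have h1 : ∀ l ∈ Finset.Icc (-(M : ℤ)) 0,
      δ l a * (μ.mul (T L l) (single 0 b)).coeff (-M) =
        (if l = -(M : ℤ) then δ l a * b else 0) +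
        ∑ k ∈ Finset.range M, ∑ s ∈ LStar.A M (k + 1), F l s := by
    intro l hl
    rw [Finset.mem_Icc] at hl
    rw [LStar.coeff_T_mul_single hδ b M hl.2 (by omega), Finset.sum_range_succ', mul_add,
      add_comm (δ l a * _) (δ l a * _)]
    congr 1
    · simp only [LStar.A, Finset.sum_singleton, LStar.zbinom_zero_right, dcomp,
        one_smul]
      by_cases h : l = -(M : ℤ)
      · rw [if_pos h, if_pos (by rw [List.sum_nil]; push_cast; omega)]
      · rw [if_neg h, if_neg (by rw [List.sum_nil]; push_cast; omega), mul_zero]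
    · rw [Finset.mul_sum]
      refine Finset.sum_congr rfl fun k _ => ?_
      rw [Finset.mul_sum]
      refine Finset.sum_congr rfl fun s hs => ?_
      rw [LStar.mem_A] at hs
      simp only [hF, hs.1, mul_ite, mul_zero, mul_smul_comm]
  rw [Finset.sum_congr rfl h1, Finset.sum_add_distrib, Finset.sum_ite_eq', if_pos (by simp)]
  congr 1
  have hdisj : ∀ x ∈ (Finset.range M : Set ℕ), ∀ y ∈ (Finset.range M : Set ℕ), x ≠ y →
      Disjoint (LStar.A (M : ℤ) (x + 1)) (LStar.A (M : ℤ) (y + 1)) := by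
    intro x _ y _ hxy
    rw [Finset.disjoint_left]
    intro s h1 h2
    rw [LStar.mem_A] at h1 h2
    omega
  rw [finsum_eq_sum_of_support_subset (s := Finset.Icc (-(M : ℤ)) 0 ×ˢ
    (Finset.range M).biUnion fun k => LStar.A M (k + 1)), Finset.sum_product]
  · refine Finset.sum_congr rfl fun l hl => ?_
    rw [Finset.mem_Icc] at hl
    rw [Finset.sum_biUnion hdisj]
    refine Finset.sum_congr rfl fun k _ => Finset.sum_congr rfl fun s hs => ?_
    rw [LStar.mem_A] at hs
    simp only [hF]
    refine if_congr ?_ rfl rfl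
    constructor
    · intro h
      refine ⟨hl.2, ?_, fun j hj => (hs.2 j hj).2, h⟩
      rintro rfl
      simp at hs
    · exact fun h => h.2.2.2
  · rintro ⟨l, s⟩ hp
    rw [Function.mem_support] at hp
    have hc := (ite_ne_right_iff.1 hp).1
    simp only at hc
    obtain ⟨hl, hne, hs, hsum⟩ := hc
    have hlen : 0 < s.length := List.length_pos_iff.2 hne
    have hb := LStar.list_sum_le hs
    simp only [Finset.coe_product, Set.mem_prod, Finset.mem_coe, Finset.mem_Icc,
      Finset.mem_biUnion, Finset.mem_range, LStar.mem_A]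
    refine ⟨by omega, s.length - 1, by omega, by omega, fun j hj => ⟨?_, hs j hj⟩⟩
    have := hb.2 j hj
    omega
end
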